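/- arXiv:2405.15235 — 4 statements merged into one kernel-verified Lean document; each statement's English description precedes it below -/
import Mathlib

section
/- Let K be a field of characteristic 0 and L a Lie algebra over K whose universal enveloping algebra U(L) is left Noetherian. Then L satisfies the ascending chain condition on Lie subalgebras. -/
/-!
Sending a Lie subalgebra `H` to the left ideal `U(L) H` is strictly monotone because
`ι x ∈ U(L) H` forces `x ∈ H`. To see the latter, we extend the projection `L → L ⧸ H` to a linear
map on `U(L)` that vanishes on `U(L) H`; this is the part of the Poincaré–Birkhoff–Witt theorem
that is needed.

Choose an ordered basis of `L` whose final segment spans `H`. Sorting a word by insertion differs,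
in `U(L)`, from the word by shorter terms, one for each exchanged pair; these are collected in the
correction of the word. If `φ` turns the commutator `x y - y x` into `⁅x, y⁆` evaluated by `φ'`,
then `φ` precomposed with the correction turns it into `⁅x, y⁆` evaluated by `φ`: this is the braid
relation for insertion, whose only nontrivial case is the Jacobi identity. Iterating the correction
`n - 1` times on words of length `n` and projecting to `L` therefore defines a functional that
descends to `U(L)`. Words ending in the final segment are corrected to combinations of words ending
in the final segment, so the functional vanishes on `U(L) H`.
-/

namespace PBW

open Module TensorAlgebra

section Order

variable {α : Type*}

theorem exists_linearOrder_isUpperSet (s : Set α) :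
    ∃ _ : LinearOrder α, IsUpperSet s := by
  classical
  let := linearOrderOfSTO (WellOrderingRel (α := α))
  let key : α → Prop ×ₗ α := fun i ↦ toLex (i ∈ s, i)
  have hkey : Function.Injective key := fun i j h ↦ congrArg (fun p ↦ (ofLex p).2) h
  exact ⟨LinearOrder.lift' key hkey, fun i j hij ↦ Prod.Lex.monotone_fst _ _ hij⟩

variable [LinearOrder α]

theorem insertionSort_eq_of_perm {v w : List α} (h : v.Perm w) :
    v.insertionSort (· ≤ ·) = w.insertionSort (· ≤ ·) :=
  ((List.perm_insertionSort _ v).trans (h.trans (List.perm_insertionSort _ w).symm)).eq_of_sortedLE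
    List.sortedLE_insertionSort List.sortedLE_insertionSort

theorem exists_insertionSort_eq_append_singleton {s : Set α}
    (hs : IsUpperSet s) {i : α} (hi : i ∈ s) {w : List α} (hw : i ∈ w) :
    ∃ v, ∃ j ∈ s, w.insertionSort (· ≤ ·) = v ++ [j] := by
  have hmem := (List.mem_insertionSort (· ≤ ·)).2 hw
  have hle := (List.pairwise_insertionSort (· ≤ ·) w).rel_getLast hmem
  exact ⟨_, _, hs hle hi, (List.dropLast_concat_getLast (List.ne_nil_of_mem hmem)).symm⟩

end Order

section Basis

theorem basis_induction {R V ι : Type*} [Semiring R] [AddCommMonoid V] [Module R V]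
    (b : Basis ι R V) {p : V → Prop} (basis : ∀ i, p (b i)) (zero : p 0)
    (add : ∀ x y, p x → p y → p (x + y)) (smul : ∀ (r : R) x, p x → p (r • x)) (x : V) : p x := by
  induction b.mem_span x using Submodule.span_induction with
  | mem x hx => obtain ⟨i, rfl⟩ := hx; exact basis i
  | zero => exact zero
  | add x y _ _ hx hy => exact add x y hx hy
  | smul r x _ hx => exact smul r x hx

theorem exists_basis_isUpperSet_span_eq {K V : Type*} [DivisionRing K] [AddCommGroup V]
    [Module K V] (W : Submodule K V) :
    ∃ (B : Set V) (_ : LinearOrder B) (b : Basis B K V) (s : Set B),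
      IsUpperSet s ∧ Submodule.span K (b '' s) = W := by
  obtain ⟨C, -, hspan, hC⟩ := exists_linearIndependent K (W : Set V)
  have hC : LinearIndepOn K id C := hC
  obtain ⟨order, hs⟩ :=
    exists_linearOrder_isUpperSet (Subtype.val ⁻¹' C : Set (hC.extend (Set.subset_univ C)))
  refine ⟨_, order, Basis.extend hC, _, hs, ?_⟩
  rw [Basis.coe_extend, Subtype.image_preimage_coe,
    Set.inter_eq_right.2 (hC.subset_extend (Set.subset_univ C)), hspan, Submodule.span_eq]

end Basis

section SwapCompatible

variable {R L M : Type*} [CommRing R] [LieRing L] [LieAlgebra R L] [AddCommGroup M] [Module R M]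

/-- `φ` turns commutators of adjacent letters into brackets, evaluated by `φ'`. A functional
descends to the universal enveloping algebra when it is compatible with itself; allowing two
functionals makes an induction on the length of words possible. -/
def SwapCompatible (φ φ' : TensorAlgebra R L →ₗ[R] M) : Prop :=
  ∀ (a c : TensorAlgebra R L) (x y : L),
    φ (a * (ι R x * ι R y - ι R y * ι R x) * c) = φ' (a * ι R ⁅x, y⁆ * c)

namespace SwapCompatible

variable {φ φ' : TensorAlgebra R L →ₗ[R] M}

theorem apply_mul_sub (h : SwapCompatible φ φ') (a : TensorAlgebra R L) (x y : L)
    (c : TensorAlgebra R L) :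
    φ (a * (ι R x * (ι R y * c))) - φ (a * (ι R y * (ι R x * c))) = φ' (a * (ι R ⁅x, y⁆ * c)) := by
  simpa [mul_sub, sub_mul, mul_assoc] using h a c x y

theorem apply_jacobi (h : SwapCompatible φ φ') (a : TensorAlgebra R L) (x y z : L)
    (c : TensorAlgebra R L) :
    (φ (a * (ι R x * (ι R ⁅y, z⁆ * c))) - φ (a * (ι R ⁅y, z⁆ * (ι R x * c)))) +
      (φ (a * (ι R y * (ι R ⁅z, x⁆ * c))) - φ (a * (ι R ⁅z, x⁆ * (ι R y * c)))) +
      (φ (a * (ι R z * (ι R ⁅x, y⁆ * c))) - φ (a * (ι R ⁅x, y⁆ * (ι R z * c)))) = 0 := by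
  simp only [h.apply_mul_sub, ← map_add, ← mul_add, ← add_mul, lie_jacobi, map_zero, zero_mul,
    mul_zero]

end SwapCompatible

theorem swapCompatible_comp_ιInv (f : L →ₗ[R] M) : SwapCompatible (f ∘ₗ ιInv) 0 := by
  intro a c x y
  simp [ιInv, mul_sub, sub_mul]

end SwapCompatible

section Descent

variable {R L M : Type*} [CommRing R] [LieRing L] [LieAlgebra R L] [AddCommGroup M] [Module R M]

variable (R L M) in
/-- The functionals on the tensor algebra that respect the defining relations of the universal
enveloping algebra. -/
def relationDual : Submodule R (TensorAlgebra R L →ₗ[R] M) where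
  carrier := {φ | SwapCompatible φ φ}
  add_mem' hφ hψ a c x y := by simp only [LinearMap.add_apply, hφ a c x y, hψ a c x y]
  zero_mem' _ _ _ _ := by simp only [LinearMap.zero_apply]
  smul_mem' r φ hφ a c x y := by simp only [LinearMap.smul_apply, hφ a c x y]

attribute [local instance] LieRing.ofAssociativeRing

variable (R L M) in
/-- The action of `L` on functionals by `(x • φ) t = φ (t * x)`. It makes them a module over the
universal enveloping algebra. -/
def relationDualAction : L →ₗ⁅R⁆ Module.End R (relationDual R L M) where
  toFun x :=
    { toFun φ := ⟨φ.1 ∘ₗ LinearMap.mulRight R (ι R x),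
        fun a c y z ↦ by simpa [mul_assoc] using φ.2 a (c * ι R x) y z⟩
      map_add' _ _ := rfl
      map_smul' _ _ := rfl }
  map_add' x y := by ext; simp [mul_add]
  map_smul' r x := by ext; simp
  map_lie' {x y} := by
    ext φ t
    simpa [LieRing.of_associative_ring_bracket, mul_assoc, mul_sub] using (φ.2 t 1 x y).symm

@[simp]
theorem relationDualAction_apply (x : L) (φ : relationDual R L M) (t : TensorAlgebra R L) :
    (relationDualAction R L M x φ).1 t = φ.1 (t * ι R x) := rfl

theorem SwapCompatible.exists_descent {φ : TensorAlgebra R L →ₗ[R] M} (hφ : SwapCompatible φ φ) :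
    ∃ ψ : UniversalEnvelopingAlgebra R L →ₗ[R] M,
      (∀ x, ψ (UniversalEnvelopingAlgebra.ι R x) = φ (ι R x)) ∧
      ∀ x, (∀ t, φ (t * ι R x) = 0) → ∀ u, ψ (u * UniversalEnvelopingAlgebra.ι R x) = 0 := by
  let act := UniversalEnvelopingAlgebra.lift R (relationDualAction R L M)
  let φ₀ : relationDual R L M := ⟨φ, hφ⟩
  let evalOne : relationDual R L M →ₗ[R] M :=
    LinearMap.applyₗ (1 : TensorAlgebra R L) ∘ₗ (relationDual R L M).subtype
  refine ⟨evalOne ∘ₗ LinearMap.applyₗ φ₀ ∘ₗ act.toLinearMap, fun x ↦ ?_, fun x hx u ↦ ?_⟩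
  · simp [act, evalOne, φ₀]
  · have hxφ : relationDualAction R L M x φ₀ = 0 := Subtype.ext (LinearMap.ext hx)
    simp [act, hxφ]

end Descent

section Word

variable {R L I : Type*} [CommRing R] [LieRing L] [LieAlgebra R L] (b : Basis I R L)

/-- The monomial in the tensor algebra spelled by a list of basis indices. -/
noncomputable def word (w : List I) : TensorAlgebra R L :=
  (w.map fun i ↦ ι R (b i)).prod

@[simp]
theorem word_nil : word b [] = 1 := rfl

@[simp]
theorem word_cons (i : I) (w : List I) : word b (i :: w) = ι R (b i) * word b w := by
  simp [word]

@[simp]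
theorem word_append (v w : List I) : word b (v ++ w) = word b v * word b w := by
  simp [word]

/-- The basis of the tensor algebra consisting of words. -/
noncomputable def wordBasis : Basis (List I) R (TensorAlgebra R L) :=
  b.tensorAlgebra.reindex FreeMonoid.toList

@[simp]
theorem wordBasis_apply (w : List I) : wordBasis b w = word b w := by
  simp [wordBasis, Basis.tensorAlgebra, FreeAlgebra.basisFreeMonoid,
    FreeAlgebra.equivMonoidAlgebraFreeMonoid, word, map_list_prod, Function.comp_def]

theorem SwapCompatible.of_word {M : Type*} [AddCommGroup M] [Module R M]
    {φ φ' : TensorAlgebra R L →ₗ[R] M}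
    (h : ∀ u v i j, φ (word b (u ++ i :: j :: v)) - φ (word b (u ++ j :: i :: v)) =
      φ' (word b u * (ι R ⁅b i, b j⁆ * word b v))) :
    SwapCompatible φ φ' := by
  intro a c x y
  induction a using basis_induction (wordBasis b) with
  | zero => simp
  | add s t hs ht => simp only [add_mul, map_add, hs, ht]
  | smul r t ht => simp only [smul_mul_assoc, map_smul, ht]
  | basis u =>
  induction c using basis_induction (wordBasis b) with
  | zero => simp
  | add s t hs ht => simp only [mul_add, map_add, hs, ht]
  | smul r t ht => simp only [mul_smul_comm, map_smul, ht]
  | basis v =>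
  induction x using basis_induction b with
  | zero => simp
  | add s t hs ht =>
    simp only [mul_add, add_mul, map_add, add_lie, ← hs, ← ht, mul_sub, sub_mul, map_sub]; abel
  | smul r t ht =>
    simp only [mul_smul_comm, smul_mul_assoc, map_smul, smul_lie, ← ht, ← smul_sub]
  | basis i =>
  induction y using basis_induction b with
  | zero => simp
  | add s t hs ht =>
    simp only [mul_add, add_mul, map_add, lie_add, ← hs, ← ht, mul_sub, sub_mul, map_sub]; abel
  | smul r t ht =>
    simp only [mul_smul_comm, smul_mul_assoc, map_smul, lie_smul, ← ht, ← smul_sub]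
  | basis j => simpa [mul_sub, sub_mul, mul_assoc] using h u v i j

end Word

section Correction

variable {R L I M : Type*} [CommRing R] [LieRing L] [LieAlgebra R L] [AddCommGroup M] [Module R M]
  [LinearOrder I] (b : Basis I R L)

/-- The sum, over the letters of `w` that `i` passes when inserted in order into `w`, of the word
in which the exchanged pair is replaced by its bracket. -/
noncomputable def insertCorrection (i : I) : List I → TensorAlgebra R L
  | [] => 0
  | j :: w => if i ≤ j then 0 else ι R ⁅b i, b j⁆ * word b w + ι R (b j) * insertCorrection i w

/-- The sum, over the exchanges made by insertion sort, of the word in which the exchanged pair is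
replaced by its bracket. -/
noncomputable def sortCorrection : List I → TensorAlgebra R L
  | [] => 0
  | i :: w => ι R (b i) * sortCorrection w + insertCorrection b i (w.insertionSort (· ≤ ·))

/-- The linear extension of `sortCorrection` to the tensor algebra. -/
noncomputable def correction : TensorAlgebra R L →ₗ[R] TensorAlgebra R L :=
  (wordBasis b).constr R (sortCorrection b)

@[simp]
theorem correction_word (w : List I) : correction b (word b w) = sortCorrection b w := by
  rw [correction, ← wordBasis_apply, Basis.constr_basis]

namespace SwapCompatible

variable {φ φ' : TensorAlgebra R L →ₗ[R] M}

theorem apply_insertCorrection (h : SwapCompatible φ φ') (t : TensorAlgebra R L) (i : I)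
    (w : List I) :
    φ' (t * insertCorrection b i w) =
      φ (t * word b (i :: w)) - φ (t * word b (w.orderedInsert (· ≤ ·) i)) := by
  induction w generalizing t with
  | nil => simp [insertCorrection]
  | cons j w ih =>
    by_cases hij : i ≤ j
    · simp [insertCorrection, hij]
    · have ih := ih (t * ι R (b j))
      have swap := h.apply_mul_sub t (b i) (b j) (word b w)
      simp only [mul_assoc, word_cons] at ih
      simp only [insertCorrection, hij, if_false, List.orderedInsert_cons, word_cons, mul_add,
        map_add]
      linear_combination (norm := module) ih - swap

theorem apply_sortCorrection (h : SwapCompatible φ φ') (t : TensorAlgebra R L) (w : List I) :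
    φ' (t * sortCorrection b w) =
      φ (t * word b w) - φ (t * word b (w.insertionSort (· ≤ ·))) := by
  induction w generalizing t with
  | nil => simp [sortCorrection]
  | cons i w ih =>
    have ih := ih (t * ι R (b i))
    have insert := h.apply_insertCorrection b t i (w.insertionSort (· ≤ ·))
    simp only [mul_assoc, word_cons] at ih insert
    simp only [sortCorrection, List.insertionSort_cons, word_cons, mul_add, map_add]
    linear_combination (norm := module) ih + insert

theorem insertCorrection_braid_of_lt (h : SwapCompatible φ φ') (t : TensorAlgebra R L) {i j : I}
    (hji : j < i) (w : List I) :
    φ (t * (ι R (b i) * insertCorrection b j w +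
        insertCorrection b i (w.orderedInsert (· ≤ ·) j))) -
      φ (t * (ι R (b j) * insertCorrection b i w +
        insertCorrection b j (w.orderedInsert (· ≤ ·) i))) =
      φ (t * (ι R ⁅b i, b j⁆ * word b w)) := by
  induction w generalizing t with
  | nil => simp [insertCorrection, hji.le, hji.not_ge]
  | cons k w ih =>
    rcases le_or_gt i k with hik | hki
    · simp [insertCorrection, hik, hji.le.trans hik, hji.le, hji.not_ge]
    rcases le_or_gt j k with hjk | hkj
    · simp [insertCorrection, hjk, hki.not_ge, hji.not_ge, mul_add]
    have ih := ih (t * ι R (b k))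
    have swap_ik := h.apply_mul_sub t (b i) (b k) (insertCorrection b j w)
    have swap_jk := h.apply_mul_sub t (b j) (b k) (insertCorrection b i w)
    have insert_j := h.apply_insertCorrection b (t * ι R ⁅b i, b k⁆) j w
    have insert_i := h.apply_insertCorrection b (t * ι R ⁅b j, b k⁆) i w
    have jacobi := h.apply_jacobi t (b i) (b j) (b k) (word b w)
    rw [← lie_skew (b k) (b i)] at jacobi
    simp only [map_add, map_neg, mul_add, neg_mul, mul_neg, mul_assoc,
      word_cons] at ih insert_i insert_j jacobi
    simp only [insertCorrection, hki.not_ge, hkj.not_ge, if_false, List.orderedInsert_cons,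
      word_cons, map_add, mul_add]
    linear_combination (norm := module) ih + swap_ik - swap_jk + insert_j - insert_i + jacobi

theorem insertCorrection_braid (h : SwapCompatible φ φ') (t : TensorAlgebra R L) (i j : I)
    (w : List I) :
    φ (t * (ι R (b i) * insertCorrection b j w +
        insertCorrection b i (w.orderedInsert (· ≤ ·) j))) -
      φ (t * (ι R (b j) * insertCorrection b i w +
        insertCorrection b j (w.orderedInsert (· ≤ ·) i))) =
      φ (t * (ι R ⁅b i, b j⁆ * word b w)) := by
  rcases lt_trichotomy j i with hji | rfl | hij
  · exact h.insertCorrection_braid_of_lt b t hji w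
  · simp
  · rw [← lie_skew, map_neg, neg_mul, mul_neg, map_neg, ← h.insertCorrection_braid_of_lt b t hij w,
      neg_sub]

theorem sortCorrection_swap (h : SwapCompatible φ φ') (t : TensorAlgebra R L) (u v : List I)
    (i j : I) :
    φ (t * sortCorrection b (u ++ i :: j :: v)) - φ (t * sortCorrection b (u ++ j :: i :: v)) =
      φ (t * (word b u * (ι R ⁅b i, b j⁆ * word b v))) := by
  induction u generalizing t with
  | nil =>
    have swap := h.apply_mul_sub t (b i) (b j) (sortCorrection b v)
    have sort := h.apply_sortCorrection b (t * ι R ⁅b i, b j⁆) v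
    have braid := h.insertCorrection_braid b t i j (v.insertionSort (· ≤ ·))
    simp only [mul_add, mul_assoc, map_add] at sort braid
    simp only [List.nil_append, sortCorrection, List.insertionSort_cons, mul_add, map_add, word_nil,
      one_mul]
    linear_combination (norm := module) swap + sort + braid
  | cons k u ih =>
    have hsort := insertionSort_eq_of_perm ((List.Perm.swap j i v).append_left u)
    simpa [sortCorrection, hsort, mul_add, mul_assoc] using ih (t * ι R (b k))

theorem comp_correction (h : SwapCompatible φ φ') : SwapCompatible (φ ∘ₗ correction b) φ :=
  .of_word b fun u v i j ↦ by
    simpa only [LinearMap.comp_apply, correction_word, one_mul] using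
      h.sortCorrection_swap b 1 u v i j

end SwapCompatible

theorem swapCompatible_comp_correction_pow (f : L →ₗ[R] M) (n : ℕ) :
    SwapCompatible (f ∘ₗ ιInv ∘ₗ correction b ^ (n + 1)) (f ∘ₗ ιInv ∘ₗ correction b ^ n) := by
  induction n with
  | zero => exact (swapCompatible_comp_ιInv f).comp_correction b
  | succ n ih => exact ih.comp_correction b

end Correction

section Extension

variable {R L I M : Type*} [CommRing R] [LieRing L] [LieAlgebra R L] [AddCommGroup M] [Module R M]
  [LinearOrder I] (b : Basis I R L) (f : L →ₗ[R] M)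

/-- The extension of a linear map on `L` to the tensor algebra that descends to the universal
enveloping algebra: a word of length `n` is corrected `n - 1` times, which leaves a vector of `L`,
and `f` is evaluated there. The value at the empty word is `0`. -/
noncomputable def extension : TensorAlgebra R L →ₗ[R] M :=
  (wordBasis b).constr R fun w ↦ f (ιInv ((correction b ^ (w.length - 1)) (word b w)))

theorem extension_word (w : List I) :
    extension b f (word b w) = f (ιInv ((correction b ^ (w.length - 1)) (word b w))) := by
  rw [extension, ← wordBasis_apply, Basis.constr_basis, wordBasis_apply]

theorem extension_ι (x : L) : extension b f (ι R x) = f x := by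
  suffices extension b f ∘ₗ ι R = f from LinearMap.congr_fun this x
  refine b.ext fun i ↦ ?_
  simpa [ι_leftInverse (b i)] using extension_word b f [i]

theorem extension_word_mul_ι_mul_word (u v : List I) (x : L) :
    extension b f (word b u * (ι R x * word b v)) =
      f (ιInv ((correction b ^ (u.length + v.length)) (word b u * (ι R x * word b v)))) := by
  induction x using basis_induction b with
  | basis i => simpa [← add_assoc] using extension_word b f (u ++ i :: v)
  | zero => simp
  | add x y hx hy => simp only [map_add, add_mul, mul_add, hx, hy]
  | smul r x hx => simp only [map_smul, smul_mul_assoc, mul_smul_comm, hx]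

theorem swapCompatible_extension : SwapCompatible (extension b f) (extension b f) := by
  refine .of_word b fun u v i j ↦ ?_
  rw [extension_word_mul_ι_mul_word, extension_word, extension_word]
  simpa [mul_assoc, ← add_assoc] using
    (swapCompatible_comp_correction_pow b f (u.length + v.length)).apply_mul_sub
      (word b u) (b i) (b j) (word b v)

end Extension

section LeftIdeal

theorem ιInv_mul_ι {R V : Type*} [CommSemiring R] [AddCommMonoid V] [Module R V]
    (t : TensorAlgebra R V) (x : V) : ιInv (t * ι R x) = algebraMapInv t • x := by
  -- These are the instances chosen in the definition of `ιInv`.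
  let : Module Rᵐᵒᵖ V := Module.compHom _ ((RingHom.id R).fromOpposite mul_comm)
  have : IsCentralScalar R V := ⟨fun r m ↦ rfl⟩
  have fst_toTrivSqZeroExt :
      (TrivSqZeroExt.fstHom R R V).comp toTrivSqZeroExt = algebraMapInv := by
    ext
    simp [algebraMapInv]
  simp [ιInv, ← fst_toTrivSqZeroExt]

variable {R L M : Type*} [CommRing R] [LieRing L] [LieAlgebra R L] [AddCommGroup M] [Module R M]

/-- The left ideal of the tensor algebra generated by a submodule of `L`, as an `R`-submodule. -/
def tensorLeftIdeal (W : Submodule R L) : Submodule R (TensorAlgebra R L) :=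
  ⊤ * W.map (ι R)

variable {W : Submodule R L}

theorem mul_ι_mem_tensorLeftIdeal (t : TensorAlgebra R L) {x : L} (hx : x ∈ W) :
    t * ι R x ∈ tensorLeftIdeal W :=
  Submodule.mul_mem_mul Submodule.mem_top (Submodule.mem_map_of_mem hx)

theorem mul_mem_tensorLeftIdeal (s : TensorAlgebra R L) {t : TensorAlgebra R L}
    (ht : t ∈ tensorLeftIdeal W) : s * t ∈ tensorLeftIdeal W := by
  have hst := Submodule.mul_mem_mul (Submodule.mem_top (x := s)) ht
  rw [tensorLeftIdeal, ← mul_assoc] at hst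
  exact Submodule.smul_mono_left le_top hst

theorem tensorLeftIdeal_le_ker_comp_ιInv {f : L →ₗ[R] M} (hf : W ≤ f.ker) :
    tensorLeftIdeal W ≤ (f ∘ₗ ιInv).ker := by
  refine Submodule.mul_le.2 fun t _ y hy ↦ ?_
  obtain ⟨x, hx, rfl⟩ := hy
  have hfx : f x = 0 := hf hx
  simp [ιInv_mul_ι, hfx]

variable {I : Type*} (b : Basis I R L) {s : Set I}

theorem tensorLeftIdeal_span_basis :
    tensorLeftIdeal (Submodule.span R (b '' s)) =
      Submodule.span R {t | ∃ v, ∃ i ∈ s, word b (v ++ [i]) = t} := by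
  rw [tensorLeftIdeal, ← (wordBasis b).span_eq, Submodule.map_span, Submodule.span_mul_span]
  congr 1
  ext t
  simp [Set.mem_mul]

variable [LinearOrder I]

variable {H : LieSubalgebra R L} (hs : IsUpperSet s)
  (hspan : Submodule.span R (b '' s) = H.toSubmodule)

include hs hspan

theorem insertCorrection_mem_tensorLeftIdeal (i : I) (w : List I) {j : I} (hj : j ∈ s) :
    insertCorrection b i (w ++ [j]) ∈ tensorLeftIdeal H.toSubmodule := by
  have basis_mem {k : I} (hk : k ∈ s) : b k ∈ H.toSubmodule :=
    hspan ▸ Submodule.subset_span (Set.mem_image_of_mem b hk)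
  induction w with
  | nil =>
    rcases le_or_gt i j with hij | hji
    · simp [insertCorrection, hij]
    · have hbracket : ⁅b i, b j⁆ ∈ H.toSubmodule :=
        H.lie_mem (basis_mem (hs hji.le hj)) (basis_mem hj)
      simpa [insertCorrection, hji.not_ge] using mul_ι_mem_tensorLeftIdeal 1 hbracket
  | cons k w ih =>
    rcases le_or_gt i k with hik | hki
    · simp [insertCorrection, hik]
    · have hword : ι R ⁅b i, b k⁆ * word b (w ++ [j]) ∈ tensorLeftIdeal H.toSubmodule := by
        simpa [mul_assoc] using
          mul_ι_mem_tensorLeftIdeal (ι R ⁅b i, b k⁆ * word b w) (basis_mem hj)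
      simpa only [List.cons_append, insertCorrection, hki.not_ge, if_false] using
        add_mem hword (mul_mem_tensorLeftIdeal _ ih)

theorem sortCorrection_mem_tensorLeftIdeal (w : List I) {j : I} (hj : j ∈ s) :
    sortCorrection b (w ++ [j]) ∈ tensorLeftIdeal H.toSubmodule := by
  induction w with
  | nil => simp [sortCorrection, insertCorrection]
  | cons i w ih =>
    obtain ⟨v, k, hk, hsort⟩ :=
      exists_insertionSort_eq_append_singleton hs hj (w := w ++ [j]) (by simp)
    rw [List.cons_append, sortCorrection, hsort]
    exact add_mem (mul_mem_tensorLeftIdeal _ ih)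
      (insertCorrection_mem_tensorLeftIdeal b hs hspan i v hk)

theorem mapsTo_correction_tensorLeftIdeal :
    Set.MapsTo (correction b) (tensorLeftIdeal H.toSubmodule) (tensorLeftIdeal H.toSubmodule) := by
  suffices tensorLeftIdeal (Submodule.span R (b '' s)) ≤
      (tensorLeftIdeal H.toSubmodule).comap (correction b) from fun t ht ↦ this (hspan ▸ ht)
  rw [tensorLeftIdeal_span_basis, Submodule.span_le]
  rintro _ ⟨v, i, hi, rfl⟩
  simpa [-word_append] using sortCorrection_mem_tensorLeftIdeal b hs hspan v hi

theorem tensorLeftIdeal_le_ker_extension {f : L →ₗ[R] M} (hf : H.toSubmodule ≤ f.ker) :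
    tensorLeftIdeal H.toSubmodule ≤ (extension b f).ker := by
  suffices tensorLeftIdeal (Submodule.span R (b '' s)) ≤ (extension b f).ker from hspan ▸ this
  rw [tensorLeftIdeal_span_basis, Submodule.span_le]
  rintro _ ⟨v, i, hi, rfl⟩
  have hword : word b (v ++ [i]) ∈ tensorLeftIdeal H.toSubmodule := by
    rw [← hspan, tensorLeftIdeal_span_basis]
    exact Submodule.subset_span ⟨v, i, hi, rfl⟩
  have hpow := (mapsTo_correction_tensorLeftIdeal b hs hspan).iterate
    ((v ++ [i]).length - 1) hword
  rw [SetLike.mem_coe, LinearMap.mem_ker, extension_word, Module.End.pow_apply]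
  exact tensorLeftIdeal_le_ker_comp_ιInv hf hpow

theorem exists_extension_of_le_ker {f : L →ₗ[R] M} (hf : H.toSubmodule ≤ f.ker) :
    ∃ ψ : UniversalEnvelopingAlgebra R L →ₗ[R] M,
      (∀ x, ψ (UniversalEnvelopingAlgebra.ι R x) = f x) ∧
      ∀ u, ∀ x ∈ H, ψ (u * UniversalEnvelopingAlgebra.ι R x) = 0 := by
  obtain ⟨ψ, hι, hmul⟩ := (swapCompatible_extension b f).exists_descent
  refine ⟨ψ, fun x ↦ (hι x).trans (extension_ι b f x), fun u x hx ↦ hmul x (fun t ↦ ?_) u⟩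
  exact tensorLeftIdeal_le_ker_extension b hs hspan hf (mul_ι_mem_tensorLeftIdeal t hx)

end LeftIdeal

section EnvelopingLeftIdeal

/-- The left ideal of the universal enveloping algebra generated by a Lie subalgebra. -/
def envelopingLeftIdeal {R L : Type*} [CommRing R] [LieRing L] [LieAlgebra R L]
    (H : LieSubalgebra R L) : Ideal (UniversalEnvelopingAlgebra R L) :=
  Ideal.span (UniversalEnvelopingAlgebra.ι R '' (H : Set L))

theorem mem_of_ι_mem_envelopingLeftIdeal {R L I : Type*} [CommRing R] [LieRing L] [LieAlgebra R L]
    [LinearOrder I] (b : Basis I R L) {s : Set I} (hs : IsUpperSet s) {H : LieSubalgebra R L}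
    (hspan : Submodule.span R (b '' s) = H.toSubmodule) {x : L}
    (hx : UniversalEnvelopingAlgebra.ι R x ∈ envelopingLeftIdeal H) : x ∈ H := by
  obtain ⟨ψ, hψι, hψ⟩ := exists_extension_of_le_ker b hs hspan H.toSubmodule.ker_mkQ.ge
  have hψ_zero : ∀ u ∈ envelopingLeftIdeal H, ψ u = 0 := fun u hu ↦ by
    induction hu using Submodule.closure_induction with
    | zero => exact map_zero ψ
    | add u v _ _ hu hv => rw [map_add, hu, hv, add_zero]
    | smul_mem u v hv => obtain ⟨y, hy, rfl⟩ := hv; exact hψ u y hy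
  rw [← LieSubalgebra.mem_toSubmodule, ← H.toSubmodule.ker_mkQ, LinearMap.mem_ker, ← hψι]
  exact hψ_zero _ hx

variable {K L : Type*} [Field K] [LieRing L] [LieAlgebra K L]

theorem ι_mem_envelopingLeftIdeal {H : LieSubalgebra K L} {x : L} :
    UniversalEnvelopingAlgebra.ι K x ∈ envelopingLeftIdeal H ↔ x ∈ H := by
  refine ⟨fun hx ↦ ?_, fun hx ↦ Ideal.subset_span (Set.mem_image_of_mem _ hx)⟩
  obtain ⟨B, _, b, s, hs, hspan⟩ := exists_basis_isUpperSet_span_eq H.toSubmodule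
  exact mem_of_ι_mem_envelopingLeftIdeal b hs hspan hx

theorem strictMono_envelopingLeftIdeal :
    StrictMono (envelopingLeftIdeal : LieSubalgebra K L → _) := by
  refine Monotone.strictMono_of_injective (fun H H' h ↦ Ideal.span_mono (Set.image_mono h)) ?_
  intro H H' h
  ext x
  rw [← ι_mem_envelopingLeftIdeal, h, ι_mem_envelopingLeftIdeal]

end EnvelopingLeftIdeal

end PBW

theorem acc_lieSubalgebra_of_noetherian_uea_general (K : Type*) [Field K] (L : Type*) [LieRing L]
    [LieAlgebra K L] [IsNoetherianRing (UniversalEnvelopingAlgebra K L)] :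
    WellFoundedGT (LieSubalgebra K L) :=
  PBW.strictMono_envelopingLeftIdeal.wellFoundedGT

/-- If the universal enveloping algebra of a Lie algebra `L` over a field of
characteristic zero is left Noetherian, then `L` satisfies the ascending chain
condition on Lie subalgebras: every ascending chain of Lie subalgebras stabilizes. -/
theorem acc_lieSubalgebra_of_noetherian_uea
    (K : Type*) [Field K] [CharZero K]
    (L : Type*) [LieRing L] [LieAlgebra K L]
    (hNoeth : IsNoetherianRing (UniversalEnvelopingAlgebra K L)) :
    ∀ f : ℕ →o LieSubalgebra K L, ∃ n : ℕ, ∀ m : ℕ, n ≤ m → f m = f n := by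
  have := acc_lieSubalgebra_of_noetherian_uea_general K L
  exact fun f ↦ (WellFoundedGT.monotone_chain_condition f).imp fun n hn m hm ↦ (hn m hm).symm
end

section
/- Let K be a field of characteristic 0 and L a Lie algebra over K whose universal enveloping algebra U(L) is left Noetherian. If q is a Lie subalgebra of L and m is a Lie ideal of q, then U(q/m) is left Noetherian. -/
/-!
Order a basis of `L` by a complement of `q` followed by `q` itself. By the Poincaré–Birkhoff–Witt
theorem the sorted words in this basis form a basis of `U(L)`, and each of them is a word in the
complement times a word in `q`. Hence `U(L)` is free as a right `U(q)`-module, and the projection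
`r` onto the direct factor `U(q)` is right `U(q)`-linear with `r 1 = 1`. A left ideal `I` of `U(q)`
is therefore recovered as `U(q) ∩ U(L) I`, so an ascending chain of left ideals of `U(q)` stops as
soon as the chain of left ideals it generates in `U(L)` does. The quotient `U(q ⧸ m)` of `U(q)`
is then left Noetherian as well.

The Poincaré–Birkhoff–Witt theorem is Bergman's diamond lemma for the rules
`x y ↦ y x + ⁅x, y⁆` with `y < x`: the only overlaps of two rules are the words `x y z` with
`z < y < x`, and these are resolvable by the Jacobi identity.
-/

open Module

namespace PoincareBirkhoffWitt

open UniversalEnvelopingAlgebra (mkAlgHom)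

section DiamondLemma

variable {R T X α : Type*} [Ring R] [AddCommGroup T] [Module R T] [Preorder α]
  (e : Basis X R T) (S : X → Set T) (rank : X → α)

/-- The combinations of basis vectors of rank smaller than that of `x`. -/
def lowerSpan (x : X) : Submodule R T :=
  Submodule.span R (e '' {y | rank y < rank x})

variable (R) in
/-- The combinations of the relations in the sets `S y` for `y` of rank smaller than that of `x`.
A relation `t ∈ S x` is thought of as the rewriting rule `e x ↦ e x - t`, and two rules for the
same `x` are resolvable if their difference lies here. -/
def lowerRelations (x : X) : Submodule R T :=
  Submodule.span R {t | ∃ y, rank y < rank x ∧ t ∈ S y}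

open Classical in
/-- The normal form of the basis vector `e x`, obtained by applying at each stage an arbitrarily
chosen rule. The test `rank y < rank x` only serves the termination check: it succeeds as soon as
`e x - t ∈ lowerSpan e rank x` for all `t ∈ S x`. -/
noncomputable def normalForm [WellFoundedLT α] (x : X) : T :=
  if h : (S x).Nonempty then
    (e.repr (e x - h.some)).sum fun y c => if rank y < rank x then c • normalForm y else 0
  else e x
termination_by (wellFounded_lt (α := α)).wrap (rank x)

variable [WellFoundedLT α]

theorem normalForm_of_not_nonempty {x : X} (h : ¬ (S x).Nonempty) :
    normalForm e S rank x = e x := by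
  rw [normalForm, dif_neg h]

/-- The linear extension of `normalForm`. -/
noncomputable def reduce : T →ₗ[R] T :=
  e.constr ℕ (normalForm e S rank)

variable {e S rank}

theorem reduce_basis (x : X) : reduce e S rank (e x) = normalForm e S rank x :=
  e.constr_basis ℕ _ x

theorem exists_mem_reduce_eq_zero
    (hlead : ∀ x, ∀ t ∈ S x, e x - t ∈ lowerSpan e rank x) {x : X} (h : (S x).Nonempty) :
    ∃ t ∈ S x, reduce e S rank t = 0 := by
  refine ⟨h.some, h.some_mem, ?_⟩
  have hsupp : ∀ y ∈ (e.repr (e x - h.some)).support, rank y < rank x :=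
    e.mem_span_image.1 (hlead x _ h.some_mem)
  have hsum : reduce e S rank (e x - h.some) = normalForm e S rank x := by
    rw [normalForm, dif_pos h, reduce, Basis.constr_apply]
    exact Finsupp.sum_congr fun y hy => (if_pos (hsupp y hy)).symm
  rwa [map_sub, reduce_basis, sub_eq_self] at hsum

theorem reduce_eq_zero (hlead : ∀ x, ∀ t ∈ S x, e x - t ∈ lowerSpan e rank x)
    (hconf : ∀ x, ∀ t ∈ S x, ∀ t' ∈ S x, t - t' ∈ lowerRelations R S rank x)
    {x : X} {t : T} (ht : t ∈ S x) : reduce e S rank t = 0 := by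
  induction h : rank x using WellFoundedLT.induction generalizing x t with
  | ind r ih =>
    subst h
    have hlower : lowerRelations R S rank x ≤ LinearMap.ker (reduce e S rank) :=
      Submodule.span_le.2 fun _ ⟨_, hy, hs⟩ => ih _ hy hs rfl
    obtain ⟨t₀, ht₀, hzero⟩ := exists_mem_reduce_eq_zero hlead ⟨t, ht⟩
    have hdiff : reduce e S rank (t - t₀) = 0 := hlower (hconf x t ht t₀ ht₀)
    rwa [map_sub, hzero, sub_zero] at hdiff

theorem basis_mem_span_normal_sup_span_relations
    (hlead : ∀ x, ∀ t ∈ S x, e x - t ∈ lowerSpan e rank x) (x : X) :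
    e x ∈ Submodule.span R (e '' {x | S x = ∅}) ⊔ Submodule.span R (⋃ x, S x) := by
  induction h : rank x using WellFoundedLT.induction generalizing x with
  | ind r ih =>
    subst h
    rcases (S x).eq_empty_or_nonempty with hx | ⟨t, ht⟩
    · exact Submodule.mem_sup_left (Submodule.subset_span ⟨x, hx, rfl⟩)
    · have hlower := Submodule.span_le.2 (Set.image_subset_iff.2 fun y hy => ih _ hy y rfl)
      rw [← sub_add_cancel (e x) t]
      exact add_mem (hlower (hlead x t ht))
        (Submodule.mem_sup_right (Submodule.subset_span (Set.mem_iUnion_of_mem x ht)))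

/-- Bergman's diamond lemma, in linear form. -/
theorem isCompl_span_normal_span_relations
    (hlead : ∀ x, ∀ t ∈ S x, e x - t ∈ lowerSpan e rank x)
    (hconf : ∀ x, ∀ t ∈ S x, ∀ t' ∈ S x, t - t' ∈ lowerRelations R S rank x) :
    IsCompl (Submodule.span R (e '' {x | S x = ∅})) (Submodule.span R (⋃ x, S x)) := by
  constructor
  · rw [Submodule.disjoint_def]
    intro t hnormal hrel
    have hfix : reduce e S rank t = LinearMap.id (R := R) t := by
      refine LinearMap.eqOn_span ?_ hnormal
      rintro _ ⟨x, hx, rfl⟩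
      exact (reduce_basis x).trans
        (normalForm_of_not_nonempty e S rank (Set.not_nonempty_iff_eq_empty.2 hx))
    have hkill : Submodule.span R (⋃ x, S x) ≤ LinearMap.ker (reduce e S rank) :=
      Submodule.span_le.2 (Set.iUnion_subset fun x t ht => reduce_eq_zero hlead hconf ht)
    exact hfix.symm.trans (hkill hrel)
  · rw [codisjoint_iff, eq_top_iff, ← e.span_eq, Submodule.span_le]
    rintro _ ⟨x, rfl⟩
    exact basis_mem_span_normal_sup_span_relations hlead x

end DiamondLemma

section Words

variable {ι : Type*} [LinearOrder ι]

/-- The number of inversions of a word: pairs of positions whose letters are in the wrong order. -/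
def inversions : List ι → ℕ
  | [] => 0
  | x :: w => w.countP (· < x) + inversions w

theorem inversions_swap (a c : List ι) {x y : ι} (h : y < x) :
    inversions (a ++ x :: y :: c) = inversions (a ++ y :: x :: c) + 1 := by
  induction a with
  | nil => grind [inversions]
  | cons z a ih =>
    have hcount : (a ++ x :: y :: c).countP (· < z) = (a ++ y :: x :: c).countP (· < z) :=
      ((List.Perm.swap y x c).append_left a).countP_eq _
    simp only [List.cons_append, inversions, ih, hcount, add_assoc]

/-- The rank of a word for the rewriting of words into sorted words: length first, then number of
inversions. -/
def wordRank (w : List ι) : ℕ ×ₗ ℕ :=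
  toLex (w.length, inversions w)

theorem wordRank_lt_of_length_lt {v w : List ι} (h : v.length < w.length) :
    wordRank v < wordRank w :=
  Prod.Lex.lt_iff.2 (Or.inl h)

theorem wordRank_swap_lt (a c : List ι) {x y : ι} (h : y < x) :
    wordRank (a ++ y :: x :: c) < wordRank (a ++ x :: y :: c) :=
  Prod.Lex.lt_iff.2 (Or.inr ⟨by simp [wordRank], by simp [wordRank, inversions_swap a c h]⟩)

theorem sortedLE_iff_forall_append_cons_cons {w : List ι} :
    w.SortedLE ↔ ∀ a x y c, w = a ++ x :: y :: c → x ≤ y := by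
  rw [List.sortedLE_iff_isChain, List.isChain_iff_forall_rel_of_append_cons_cons]
  exact ⟨fun h a x y c hw => h hw, fun h x y a c hw => h a x y c hw⟩

end Words

section Monomials

variable {ι R M : Type*} [CommRing R] [AddCommGroup M] [Module R M] (b : Basis ι R M)

/-- The word `w` in the letters of the basis `b` as an element of the tensor algebra. -/
noncomputable def monomial (w : List ι) : TensorAlgebra R M :=
  (w.map fun i => TensorAlgebra.ι R (b i)).prod

@[simp]
theorem monomial_nil : monomial b [] = 1 := rfl

@[simp]
theorem monomial_cons (i : ι) (w : List ι) :
    monomial b (i :: w) = TensorAlgebra.ι R (b i) * monomial b w :=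
  List.prod_cons

@[simp]
theorem monomial_append (v w : List ι) :
    monomial b (v ++ w) = monomial b v * monomial b w := by
  simp [monomial]

/-- The basis `b.tensorAlgebra` of the tensor algebra, indexed by lists instead of `FreeMonoid`. -/
noncomputable def monomialBasis : Basis (List ι) R (TensorAlgebra R M) :=
  b.tensorAlgebra.reindex FreeMonoid.toList

@[simp]
theorem monomialBasis_apply (w : List ι) : monomialBasis b w = monomial b w := by
  simp [monomialBasis, monomial, Basis.tensorAlgebra, FreeAlgebra.basisFreeMonoid,
    FreeAlgebra.equivMonoidAlgebraFreeMonoid, FreeMonoid.lift_apply, map_list_prod,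
    Function.comp_def]

theorem span_range_monomial : Submodule.span R (Set.range (monomial b)) = ⊤ := by
  rw [← (monomialBasis b).span_eq]
  congr 2
  exact funext fun w => (monomialBasis_apply b w).symm

theorem range_ι_pow_le_span_monomial (n : ℕ) :
    LinearMap.range (TensorAlgebra.ι R (M := M)) ^ n ≤
      Submodule.span R (monomial b '' {w | w.length = n}) := by
  induction n with
  | zero => simp [Submodule.one_eq_span]
  | succ n ih =>
    rw [pow_succ', Submodule.mul_le]
    rintro _ ⟨m, rfl⟩ v hv
    have hmem := Submodule.mul_mem_mul
      (Submodule.apply_mem_span_image_of_mem_span (TensorAlgebra.ι R) (b.mem_span m)) (ih hv)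
    rw [Submodule.span_mul_span] at hmem
    refine Submodule.span_le.2 ?_ hmem
    rintro _ ⟨_, ⟨_, ⟨i, rfl⟩, rfl⟩, _, ⟨w, rfl, rfl⟩, rfl⟩
    exact Submodule.subset_span ⟨i :: w, rfl, monomial_cons b i w⟩

theorem ι_mem_range_pow_one (X : M) :
    TensorAlgebra.ι R X ∈ LinearMap.range (TensorAlgebra.ι R (M := M)) ^ 1 := by
  rw [pow_one]
  exact LinearMap.mem_range_self _ X

theorem monomial_mem_range_ι_pow (w : List ι) :
    monomial b w ∈ LinearMap.range (TensorAlgebra.ι R (M := M)) ^ w.length := by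
  induction w with
  | nil => simp
  | cons i w ih =>
    rw [monomial_cons, List.length_cons, pow_succ']
    exact Submodule.mul_mem_mul (LinearMap.mem_range_self _ _) ih

end Monomials

section Relator

variable {R L : Type*} [CommRing R] [LieRing L] [LieAlgebra R L]

/-- The defining relator `X ⊗ Y - Y ⊗ X - ⁅X, Y⁆` of the enveloping algebra. -/
def relator : L →ₗ[R] L →ₗ[R] TensorAlgebra R L :=
  LinearMap.mk₂ R
    (fun X Y => TensorAlgebra.ι R X * TensorAlgebra.ι R Y -
      TensorAlgebra.ι R Y * TensorAlgebra.ι R X - TensorAlgebra.ι R ⁅X, Y⁆)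
    (by intros; simp only [map_add, add_lie, add_mul, mul_add]; abel)
    (by intros; simp only [map_smul, smul_lie, smul_mul_assoc, mul_smul_comm, smul_sub])
    (by intros; simp only [map_add, lie_add, add_mul, mul_add]; abel)
    (by intros; simp only [map_smul, lie_smul, smul_mul_assoc, mul_smul_comm, smul_sub])

theorem relator_apply (X Y : L) :
    relator (R := R) X Y = TensorAlgebra.ι R X * TensorAlgebra.ι R Y -
      TensorAlgebra.ι R Y * TensorAlgebra.ι R X - TensorAlgebra.ι R ⁅X, Y⁆ :=
  rfl

theorem relator_self (X : L) : relator (R := R) X X = 0 := by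
  simp [relator_apply]

theorem relator_skew (X Y : L) : -relator (R := R) Y X = relator X Y := by
  rw [relator_apply, relator_apply, ← lie_skew X Y, map_neg]
  abel

theorem relator_jacobi (X Y Z : L) :
    relator (R := R) X Y * TensorAlgebra.ι R Z - TensorAlgebra.ι R X * relator Y Z =
      relator X Z * TensorAlgebra.ι R Y - TensorAlgebra.ι R Y * relator X Z +
        TensorAlgebra.ι R Z * relator X Y - relator Y Z * TensorAlgebra.ι R X +
        relator X ⁅Y, Z⁆ + relator ⁅X, Z⁆ Y - relator ⁅X, Y⁆ Z := by
  have hlie : TensorAlgebra.ι R ⁅⁅X, Y⁆, Z⁆ =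
      TensorAlgebra.ι R ⁅X, ⁅Y, Z⁆⁆ + TensorAlgebra.ι R ⁅⁅X, Z⁆, Y⁆ := by
    rw [← map_add, lie_lie X Y Z, ← lie_skew ⁅X, Z⁆ Y, sub_eq_add_neg]
  simp only [relator_apply, hlie]
  noncomm_ring

variable {ι : Type*} [LinearOrder ι] (b : Basis ι R L)

theorem relator_mem_span (X Y : L) :
    relator (R := R) X Y ∈
      Submodule.span R {r | ∃ x y, y < x ∧ relator (R := R) (b x) (b y) = r} := by
  have hmem : relator (R := R) X Y ∈
      Submodule.map₂ relator (Submodule.span R (Set.range b)) (Submodule.span R (Set.range b)) :=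
    Submodule.apply_mem_map₂ _ (b.mem_span X) (b.mem_span Y)
  rw [Submodule.map₂_span_span] at hmem
  refine Submodule.span_le.2 ?_ hmem
  rintro _ ⟨_, ⟨x, rfl⟩, _, ⟨y, rfl⟩, rfl⟩
  change relator (R := R) (b x) (b y) ∈ Submodule.span R _
  rcases lt_trichotomy x y with h | rfl | h
  · rw [← relator_skew]
    exact neg_mem (Submodule.subset_span ⟨y, x, h, rfl⟩)
  · rw [relator_self]
    exact zero_mem _
  · exact Submodule.subset_span ⟨x, y, h, rfl⟩

/-- The relations encoding the rules `a x y c ↦ a y x c + a ⁅x, y⁆ c` for the descents `y < x` of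
the word `w = a x y c`. -/
def reductions (w : List ι) : Set (TensorAlgebra R L) :=
  {t | ∃ a x y c, w = a ++ x :: y :: c ∧ y < x ∧
    monomial b a * relator (b x) (b y) * monomial b c = t}

theorem reductions_eq_empty_iff {w : List ι} : reductions b w = ∅ ↔ w.SortedLE := by
  rw [Set.eq_empty_iff_forall_notMem, sortedLE_iff_forall_append_cons_cons]
  constructor
  · intro h a x y c hw
    by_contra! hyx
    exact h _ ⟨a, x, y, c, hw, hyx, rfl⟩
  · rintro h _ ⟨a, x, y, c, hw, hyx, rfl⟩
    exact hyx.not_ge (h a x y c hw)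

theorem mem_lowerSpan_of_mem_range_ι_pow {w : List ι} {n : ℕ} (hn : n < w.length)
    {t : TensorAlgebra R L} (ht : t ∈ LinearMap.range (TensorAlgebra.ι R (M := L)) ^ n) :
    t ∈ lowerSpan (monomialBasis b) wordRank w := by
  refine Submodule.span_le.2 ?_ (range_ι_pow_le_span_monomial b n ht)
  rintro _ ⟨v, rfl, rfl⟩
  exact Submodule.subset_span ⟨v, wordRank_lt_of_length_lt hn, monomialBasis_apply b v⟩

theorem sub_mem_lowerSpan_of_mem_reductions (w : List ι) {t : TensorAlgebra R L}
    (ht : t ∈ reductions b w) : monomialBasis b w - t ∈ lowerSpan (monomialBasis b) wordRank w := by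
  obtain ⟨a, x, y, c, rfl, hyx, rfl⟩ := ht
  have hswap : monomial b (a ++ y :: x :: c) ∈
      lowerSpan (monomialBasis b) wordRank (a ++ x :: y :: c) :=
    Submodule.subset_span ⟨_, wordRank_swap_lt a c hyx, monomialBasis_apply b _⟩
  have hbracket : monomial b a * TensorAlgebra.ι R ⁅b x, b y⁆ * monomial b c ∈
      lowerSpan (monomialBasis b) wordRank (a ++ x :: y :: c) := by
    refine mem_lowerSpan_of_mem_range_ι_pow b (n := a.length + 1 + c.length)
      (by simp; omega) ?_
    rw [pow_add, pow_add]
    exact Submodule.mul_mem_mul (Submodule.mul_mem_mul (monomial_mem_range_ι_pow b a)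
      (ι_mem_range_pow_one _)) (monomial_mem_range_ι_pow b c)
  convert add_mem hswap hbracket using 1
  simp only [monomialBasis_apply, monomial_append, monomial_cons, relator_apply]
  noncomm_ring

theorem mem_lowerRelations_of_wordRank_lt {w : List ι} (a : List ι) {x y : ι} (c : List ι)
    (hyx : y < x) (hlt : wordRank (a ++ x :: y :: c) < wordRank w) :
    monomial b a * relator (b x) (b y) * monomial b c ∈
      lowerRelations R (reductions b) wordRank w :=
  Submodule.subset_span ⟨_, hlt, a, x, y, c, rfl, hyx, rfl⟩

theorem mem_lowerRelations_of_degree_lt {w : List ι} {i j : ℕ} (hij : i + j + 2 < w.length)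
    {A C : TensorAlgebra R L} (hA : A ∈ LinearMap.range (TensorAlgebra.ι R (M := L)) ^ i)
    (hC : C ∈ LinearMap.range (TensorAlgebra.ι R (M := L)) ^ j) (X Y : L) :
    A * relator X Y * C ∈ lowerRelations R (reductions b) wordRank w := by
  have hmem := Submodule.mul_mem_mul (Submodule.mul_mem_mul
    (range_ι_pow_le_span_monomial b i hA) (relator_mem_span b X Y))
    (range_ι_pow_le_span_monomial b j hC)
  rw [Submodule.span_mul_span, Submodule.span_mul_span] at hmem
  refine Submodule.span_le.2 ?_ hmem
  rintro _ ⟨_, ⟨_, ⟨a, rfl, rfl⟩, _, ⟨x, y, hyx, rfl⟩, rfl⟩, _, ⟨c, rfl, rfl⟩, rfl⟩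
  exact mem_lowerRelations_of_wordRank_lt b a c hyx
    (wordRank_lt_of_length_lt (by simp; omega))

theorem overlap_mem_lowerRelations (a c : List ι) {x y z : ι} (hyx : y < x) (hzy : z < y) :
    monomial b a * relator (b x) (b y) * monomial b (z :: c) -
        monomial b (a ++ [x]) * relator (b y) (b z) * monomial b c ∈
      lowerRelations R (reductions b) wordRank (a ++ x :: y :: z :: c) := by
  have hzx := hzy.trans hyx
  have hyxz : wordRank (a ++ y :: x :: z :: c) < wordRank (a ++ x :: y :: z :: c) :=
    wordRank_swap_lt a (z :: c) hyx
  have hxzy : wordRank (a ++ x :: z :: y :: c) < wordRank (a ++ x :: y :: z :: c) := by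
    simpa using wordRank_swap_lt (a ++ [x]) c hzy
  have hyzx : wordRank (a ++ y :: z :: x :: c) < wordRank (a ++ y :: x :: z :: c) := by
    simpa using wordRank_swap_lt (a ++ [y]) c hzx
  have hzxy : wordRank (a ++ z :: x :: y :: c) < wordRank (a ++ x :: z :: y :: c) :=
    wordRank_swap_lt a (y :: c) hzx
  have hxz_y := mem_lowerRelations_of_wordRank_lt b a (y :: c) hzx hxzy
  have hy_xz := mem_lowerRelations_of_wordRank_lt b (a ++ [y]) c hzx (by simpa using hyxz)
  have hz_xy := mem_lowerRelations_of_wordRank_lt b (a ++ [z]) c hyx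
    (by simpa using hzxy.trans hxzy)
  have hyz_x := mem_lowerRelations_of_wordRank_lt b a (x :: c) hzy (hyzx.trans hyxz)
  have hlow := mem_lowerRelations_of_degree_lt b (w := a ++ x :: y :: z :: c)
    (by simp; omega) (monomial_mem_range_ι_pow b a) (monomial_mem_range_ι_pow b c)
  convert sub_mem (add_mem (add_mem (sub_mem (add_mem (sub_mem hxz_y hy_xz) hz_xy) hyz_x)
    (hlow (b x) ⁅b y, b z⁆)) (hlow ⁅b x, b z⁆ (b y))) (hlow ⁅b x, b y⁆ (b z)) using 1
  have hjacobi := congrArg (fun t => monomial b a * t * monomial b c)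
    (relator_jacobi (R := R) (b x) (b y) (b z))
  simp only [mul_add, add_mul, mul_sub, sub_mul] at hjacobi
  simpa only [monomial_append, monomial_cons, monomial_nil, mul_one, mul_assoc] using hjacobi

theorem disjoint_mem_lowerRelations (a l c : List ι) {x y x' y' : ι} (hyx : y < x)
    (hyx' : y' < x') :
    monomial b a * relator (b x) (b y) * monomial b (l ++ x' :: y' :: c) -
        monomial b (a ++ x :: y :: l) * relator (b x') (b y') * monomial b c ∈
      lowerRelations R (reductions b) wordRank (a ++ x :: y :: (l ++ x' :: y' :: c)) := by
  have ha := monomial_mem_range_ι_pow b a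
  have hl := monomial_mem_range_ι_pow b l
  have hc := monomial_mem_range_ι_pow b c
  have hswap_right := mem_lowerRelations_of_wordRank_lt b a (l ++ y' :: x' :: c) hyx
    (w := a ++ x :: y :: (l ++ x' :: y' :: c))
    (by simpa using wordRank_swap_lt (a ++ x :: y :: l) c hyx')
  have hswap_left := mem_lowerRelations_of_wordRank_lt b (a ++ y :: x :: l) c hyx'
    (w := a ++ x :: y :: (l ++ x' :: y' :: c))
    (by simpa using wordRank_swap_lt a (l ++ x' :: y' :: c) hyx)
  have hbracket_right := mem_lowerRelations_of_degree_lt b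
    (w := a ++ x :: y :: (l ++ x' :: y' :: c)) (i := a.length) (j := l.length + 1 + c.length)
    (by simp; omega) ha
    (by
      rw [pow_add, pow_add]
      exact Submodule.mul_mem_mul
        (Submodule.mul_mem_mul hl (ι_mem_range_pow_one ⁅b x', b y'⁆)) hc)
    (b x) (b y)
  have hbracket_left := mem_lowerRelations_of_degree_lt b
    (w := a ++ x :: y :: (l ++ x' :: y' :: c)) (i := a.length + 1 + l.length) (j := c.length)
    (by simp; omega)
    (by
      rw [pow_add, pow_add]
      exact Submodule.mul_mem_mul
        (Submodule.mul_mem_mul ha (ι_mem_range_pow_one ⁅b x, b y⁆)) hl)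
    hc (b x') (b y')
  convert sub_mem (sub_mem (add_mem hswap_right hbracket_right) hswap_left) hbracket_left using 1
  simp only [monomial_append, monomial_cons, relator_apply]
  noncomm_ring

theorem sub_mem_lowerRelations_of_append (a c l c' : List ι) {x y x' y' : ι} (hyx : y < x)
    (hyx' : y' < x') (hw : x :: y :: c = l ++ x' :: y' :: c') :
    monomial b a * relator (b x) (b y) * monomial b c -
        monomial b (a ++ l) * relator (b x') (b y') * monomial b c' ∈
      lowerRelations R (reductions b) wordRank (a ++ x :: y :: c) := by
  match l, hw with
  | [], hw =>
    simp only [List.nil_append, List.cons.injEq] at hw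
    obtain ⟨rfl, rfl, rfl⟩ := hw
    simp
  | [_], hw =>
    simp only [List.cons_append, List.nil_append, List.cons.injEq] at hw
    obtain ⟨rfl, rfl, rfl⟩ := hw
    exact overlap_mem_lowerRelations b a c' hyx hyx'
  | _ :: _ :: l, hw =>
    simp only [List.cons_append, List.cons.injEq] at hw
    obtain ⟨rfl, rfl, rfl⟩ := hw
    exact disjoint_mem_lowerRelations b a l c' hyx hyx'

theorem sub_mem_lowerRelations_of_mem_reductions (w : List ι) {t t' : TensorAlgebra R L}
    (ht : t ∈ reductions b w) (ht' : t' ∈ reductions b w) :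
    t - t' ∈ lowerRelations R (reductions b) wordRank w := by
  obtain ⟨a, x, y, c, hw, hyx, rfl⟩ := ht
  obtain ⟨a', x', y', c', hw', hyx', rfl⟩ := ht'
  rcases List.append_eq_append_iff.1 (hw.symm.trans hw') with ⟨l, rfl, h⟩ | ⟨l, rfl, h⟩
  · rw [hw]
    exact sub_mem_lowerRelations_of_append b a c l c' hyx hyx' h
  · rw [hw', ← neg_sub]
    exact neg_mem (sub_mem_lowerRelations_of_append b a' c' l c hyx' hyx h)

theorem isCompl_span_sorted_span_reductions :
    IsCompl (Submodule.span R (monomial b '' {w | w.SortedLE}))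
      (Submodule.span R (⋃ w, reductions b w)) := by
  have h := isCompl_span_normal_span_relations
    (fun w _ => sub_mem_lowerSpan_of_mem_reductions b w)
    (fun w _ ht _ ht' => sub_mem_lowerRelations_of_mem_reductions b w ht ht')
  simpa only [reductions_eq_empty_iff, monomialBasis_apply] using h

end Relator

section PBWBasis

attribute [local instance] LieRing.ofAssociativeRing

section Kernel

variable {R L : Type*} [CommRing R] [LieRing L] [LieAlgebra R L]

theorem mkAlgHom_surjective : Function.Surjective (mkAlgHom R L) :=
  RingCon.mkₐ_surjective _

theorem mkAlgHom_relator (X Y : L) : mkAlgHom R L (relator X Y) = 0 := by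
  rw [relator_apply, map_sub, map_sub, map_mul, map_mul, sub_eq_zero,
    ← LieRing.of_associative_ring_bracket]
  exact ((UniversalEnvelopingAlgebra.ι R).map_lie X Y).symm

theorem ker_mkAlgHom_le (J : Ideal (TensorAlgebra R L)) [J.IsTwoSided]
    (hJ : ∀ X Y : L, relator X Y ∈ J) : RingHom.ker (mkAlgHom R L) ≤ J := by
  let f : L →ₗ⁅R⁆ TensorAlgebra R L ⧸ J :=
    { (Ideal.Quotient.mkₐ R J).toLinearMap ∘ₗ TensorAlgebra.ι R with
      map_lie' := fun {X Y} => (Ideal.Quotient.mk_eq_mk_iff_sub_mem _ _).2 <| by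
        rw [← neg_sub]
        exact neg_mem (hJ X Y) }
  have hf : (UniversalEnvelopingAlgebra.lift R f).comp (mkAlgHom R L) = Ideal.Quotient.mkₐ R J :=
    TensorAlgebra.hom_ext (LinearMap.ext fun X => UniversalEnvelopingAlgebra.lift_ι_apply' R f X)
  intro t ht
  rw [← Ideal.Quotient.eq_zero_iff_mem, ← Ideal.Quotient.mkₐ_eq_mk R, ← hf, AlgHom.comp_apply,
    RingHom.mem_ker.1 ht, map_zero]

end Kernel

variable {R L ι : Type*} [CommRing R] [LieRing L] [LieAlgebra R L] [LinearOrder ι]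
  (b : Basis ι R L)

theorem span_reductions : Submodule.span R (⋃ w, reductions b w) =
    ⊤ * Submodule.span R {r | ∃ x y, y < x ∧ relator (R := R) (b x) (b y) = r} * ⊤ := by
  rw [← span_range_monomial b, Submodule.span_mul_span, Submodule.span_mul_span]
  congr 1
  ext t
  simp only [reductions, Set.mem_iUnion, Set.mem_ofPred_eq]
  constructor
  · rintro ⟨_, a, x, y, c, -, hyx, rfl⟩
    exact Set.mul_mem_mul (Set.mul_mem_mul ⟨a, rfl⟩ ⟨x, y, hyx, rfl⟩) ⟨c, rfl⟩
  · rintro ⟨_, ⟨_, ⟨a, rfl⟩, _, ⟨x, y, hyx, rfl⟩, rfl⟩, _, ⟨c, rfl⟩, rfl⟩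
    exact ⟨_, a, x, y, c, rfl, hyx, rfl⟩

theorem mul_mul_mem_span_reductions (A C : TensorAlgebra R L) {t : TensorAlgebra R L}
    (ht : t ∈ Submodule.span R (⋃ w, reductions b w)) :
    A * t * C ∈ Submodule.span R (⋃ w, reductions b w) := by
  rw [span_reductions] at ht ⊢
  refine Submodule.mul_le.1 ?_ (A * t) (Submodule.mul_mem_mul (Submodule.mem_top (x := A)) ht) C
    (Submodule.mem_top (x := C))
  rw [← mul_assoc, ← mul_assoc, mul_assoc _ ⊤ ⊤]
  gcongr <;> exact le_top

theorem ker_mkAlgHom :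
    LinearMap.ker (mkAlgHom R L).toLinearMap = Submodule.span R (⋃ w, reductions b w) := by
  apply le_antisymm
  · let J : Ideal (TensorAlgebra R L) :=
      { Submodule.span R (⋃ w, reductions b w) with
        smul_mem' := fun A t ht => by simpa using mul_mul_mem_span_reductions b A 1 ht }
    have : J.IsTwoSided :=
      ⟨fun {t} C ht => one_mul t ▸ mul_mul_mem_span_reductions b 1 C ht⟩
    refine ker_mkAlgHom_le J fun X Y => ?_
    change relator X Y ∈ Submodule.span R (⋃ w, reductions b w)
    rw [span_reductions]
    simpa using Submodule.mul_mem_mul (Submodule.mul_mem_mul (Submodule.mem_top (x := 1))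
      (relator_mem_span b X Y)) (Submodule.mem_top (x := 1))
  · rw [Submodule.span_le]
    refine Set.iUnion_subset ?_
    rintro w _ ⟨a, x, y, c, -, -, rfl⟩
    simp [mkAlgHom_relator]

/-- The Poincaré–Birkhoff–Witt basis of the enveloping algebra, consisting of the products of
basis vectors in increasing order. -/
noncomputable def pbwBasis :
    Basis {w : List ι // w.SortedLE} R (UniversalEnvelopingAlgebra R L) :=
  let v (w : {w : List ι // w.SortedLE}) : TensorAlgebra R L := monomialBasis b w
  have hrange : Set.range v = monomial b '' {w | w.SortedLE} := by
    ext t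
    simp [v]
  have hv : IsCompl (Submodule.span R (Set.range v))
      (LinearMap.ker (mkAlgHom R L).toLinearMap) := by
    rw [hrange, ker_mkAlgHom b]
    exact isCompl_span_sorted_span_reductions b
  Basis.mk (v := (mkAlgHom R L).toLinearMap ∘ v)
    (((monomialBasis b).linearIndependent.comp _ Subtype.val_injective).map hv.disjoint)
    (by
      rw [Set.range_comp, ← Submodule.map_span, top_le_iff, LinearMap.map_eq_top_iff]
      · exact hv.sup_eq_top
      · exact LinearMap.range_eq_top.2 mkAlgHom_surjective)

theorem pbwBasis_apply (w : {w : List ι // w.SortedLE}) :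
    pbwBasis b w = (w.1.map fun i => UniversalEnvelopingAlgebra.ι R (b i)).prod := by
  simp [pbwBasis, monomial, map_list_prod, Function.comp_def]

end PBWBasis

section Retraction

section Functoriality

variable {R L L' : Type*} [CommRing R] [LieRing L] [LieAlgebra R L] [LieRing L'] [LieAlgebra R L']

attribute [local instance] LieRing.ofAssociativeRing

theorem adjoin_range_ι :
    Algebra.adjoin R (Set.range (UniversalEnvelopingAlgebra.ι R : L → _)) = ⊤ := by
  have h := congrArg (Subalgebra.map (mkAlgHom R L))
    (TensorAlgebra.adjoin_range_ι (R := R) (M := L))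
  rw [AlgHom.map_adjoin, ← Set.range_comp, Algebra.map_top,
    (AlgHom.range_eq_top _).2 mkAlgHom_surjective] at h
  exact h

/-- The homomorphism of enveloping algebras induced by a homomorphism of Lie algebras. -/
noncomputable def envelopingMap (φ : L →ₗ⁅R⁆ L') :
    UniversalEnvelopingAlgebra R L →ₐ[R] UniversalEnvelopingAlgebra R L' :=
  UniversalEnvelopingAlgebra.lift R ((UniversalEnvelopingAlgebra.ι R).comp φ)

theorem envelopingMap_ι (φ : L →ₗ⁅R⁆ L') (X : L) :
    envelopingMap φ (UniversalEnvelopingAlgebra.ι R X) = UniversalEnvelopingAlgebra.ι R (φ X) :=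
  UniversalEnvelopingAlgebra.lift_ι_apply R _ X

theorem envelopingMap_prod {ι : Type*} (φ : L →ₗ⁅R⁆ L') (f : ι → L) (w : List ι) :
    envelopingMap φ (w.map fun i => UniversalEnvelopingAlgebra.ι R (f i)).prod =
      (w.map fun i => UniversalEnvelopingAlgebra.ι R (φ (f i))).prod := by
  simp only [map_list_prod, List.map_map, Function.comp_def, envelopingMap_ι]

theorem envelopingMap_surjective {φ : L →ₗ⁅R⁆ L'} (hφ : Function.Surjective φ) :
    Function.Surjective (envelopingMap φ) := by
  rw [← AlgHom.range_eq_top, eq_top_iff, ← adjoin_range_ι, Algebra.adjoin_le_iff]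
  rintro _ ⟨Y, rfl⟩
  obtain ⟨X, rfl⟩ := hφ Y
  exact ⟨_, envelopingMap_ι φ X⟩

end Functoriality

section SortedSum

variable {σ τ : Type*} [LinearOrder σ] [LinearOrder τ]

theorem sortedLE_map_inl_append_map_inr {s : List σ} {t : List τ} :
    (s.map Sum.inlₗ ++ t.map Sum.inrₗ).SortedLE ↔ s.SortedLE ∧ t.SortedLE := by
  simp [List.sortedLE_iff_pairwise, List.pairwise_append, List.pairwise_map]

theorem exists_eq_map_inl_append_map_inr {w : List (σ ⊕ₗ τ)} (hw : w.SortedLE) :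
    ∃ (s : List σ) (t : List τ), w = s.map Sum.inlₗ ++ t.map Sum.inrₗ := by
  rw [List.sortedLE_iff_pairwise] at hw
  induction w with
  | nil => exact ⟨[], [], rfl⟩
  | cons x w ih =>
    rw [List.pairwise_cons] at hw
    obtain ⟨s, t, rfl⟩ := ih hw.2
    match x, s, hw.1 with
    | Sum.inlₗ i, s, _ => exact ⟨i :: s, t, rfl⟩
    | Sum.inrₗ j, [], _ => exact ⟨[], j :: t, rfl⟩
    | Sum.inrₗ j, i :: s, hj => simpa using hj (Sum.inlₗ i) (by simp)

end SortedSum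

variable {R L L' σ τ : Type*} [CommRing R] [LieRing L] [LieAlgebra R L] [LieRing L']
  [LieAlgebra R L'] [LinearOrder σ] [LinearOrder τ]
  (b : Basis (σ ⊕ₗ τ) R L) (b' : Basis τ R L')

/-- The linear map which deletes all Poincaré–Birkhoff–Witt monomials of `L` containing a letter
from `σ`, and reads the others in the enveloping algebra of `L'`. -/
noncomputable def retraction :
    UniversalEnvelopingAlgebra R L →ₗ[R] UniversalEnvelopingAlgebra R L' :=
  (pbwBasis b).constr ℕ fun w =>
    (w.1.map fun i => Sum.elim 0 (fun j => UniversalEnvelopingAlgebra.ι R (b' j)) (ofLex i)).prod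

theorem retraction_pbwBasis (w : {w : List (σ ⊕ₗ τ) // w.SortedLE}) :
    retraction b b' (pbwBasis b w) = (w.1.map fun i =>
      Sum.elim 0 (fun j => UniversalEnvelopingAlgebra.ι R (b' j)) (ofLex i)).prod :=
  (pbwBasis b).constr_basis ℕ _ w

theorem retraction_mul_prod {s : List σ} {t : List τ} (hs : s.SortedLE) (ht : t.SortedLE) :
    retraction b b' ((s.map fun i => UniversalEnvelopingAlgebra.ι R (b (Sum.inlₗ i))).prod *
        (t.map fun j => UniversalEnvelopingAlgebra.ι R (b (Sum.inrₗ j))).prod) =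
      0 ^ s.length * (t.map fun j => UniversalEnvelopingAlgebra.ι R (b' j)).prod := by
  have h := retraction_pbwBasis b b' ⟨_, sortedLE_map_inl_append_map_inr.2 ⟨hs, ht⟩⟩
  simpa only [pbwBasis_apply, List.map_append, List.map_map, Function.comp_def, Sum.inlₗ,
    Sum.inrₗ, ofLex_toLex, Sum.elim_inl, Sum.elim_inr, Pi.zero_apply, List.map_const',
    List.prod_append, List.prod_replicate] using h

variable {b b'} {φ : L' →ₗ⁅R⁆ L}

theorem retraction_mul_envelopingMap_of_sortedLE (hφ : ∀ j, φ (b' j) = b (Sum.inrₗ j))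
    {s : List σ} (hs : s.SortedLE) (u : UniversalEnvelopingAlgebra R L') :
    retraction b b' ((s.map fun i => UniversalEnvelopingAlgebra.ι R (b (Sum.inlₗ i))).prod *
      envelopingMap φ u) = 0 ^ s.length * u := by
  suffices h : retraction b b' ∘ₗ LinearMap.mulLeft R
      (s.map fun i => UniversalEnvelopingAlgebra.ι R (b (Sum.inlₗ i))).prod ∘ₗ
      (envelopingMap φ).toLinearMap = LinearMap.mulLeft R (0 ^ s.length) from
    LinearMap.congr_fun h u
  refine (pbwBasis b').ext fun t => ?_
  simp only [LinearMap.comp_apply, AlgHom.toLinearMap_apply, LinearMap.mulLeft_apply,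
    pbwBasis_apply, envelopingMap_prod, hφ, retraction_mul_prod b b' hs t.2]

theorem retraction_mul_envelopingMap (hφ : ∀ j, φ (b' j) = b (Sum.inrₗ j))
    (a : UniversalEnvelopingAlgebra R L) (u : UniversalEnvelopingAlgebra R L') :
    retraction b b' (a * envelopingMap φ u) = retraction b b' a * u := by
  suffices h : retraction b b' ∘ₗ LinearMap.mulRight R (envelopingMap φ u) =
      LinearMap.mulRight R u ∘ₗ retraction b b' from LinearMap.congr_fun h a
  refine (pbwBasis b).ext fun ⟨w, hw⟩ => ?_
  obtain ⟨s, t, rfl⟩ := exists_eq_map_inl_append_map_inr hw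
  have hs := (sortedLE_map_inl_append_map_inr.1 hw).1
  have hsplit : pbwBasis b ⟨_, hw⟩ =
      (s.map fun i => UniversalEnvelopingAlgebra.ι R (b (Sum.inlₗ i))).prod *
        envelopingMap φ (t.map fun j => UniversalEnvelopingAlgebra.ι R (b' j)).prod := by
    simp only [pbwBasis_apply, envelopingMap_prod, hφ, List.map_append, List.map_map,
      Function.comp_def, List.prod_append]
  simp only [LinearMap.comp_apply, LinearMap.mulRight_apply, hsplit]
  rw [mul_assoc, ← map_mul, retraction_mul_envelopingMap_of_sortedLE hφ hs,
    retraction_mul_envelopingMap_of_sortedLE hφ hs, mul_assoc]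

theorem retraction_one (hφ : ∀ j, φ (b' j) = b (Sum.inrₗ j)) : retraction b b' 1 = 1 := by
  have hnil : ([] : List σ).SortedLE := List.sortedLE_iff_pairwise.2 List.Pairwise.nil
  simpa only [List.map_nil, List.prod_nil, map_one, one_mul, List.length_nil, pow_zero] using
    retraction_mul_envelopingMap_of_sortedLE hφ hnil 1

end Retraction

section Noetherian

theorem isNoetherianRing_of_retraction {A B : Type*} [Ring A] [Ring B] [IsNoetherianRing B]
    (f : A →+* B) (r : B →+ A) (hone : r 1 = 1) (hmul : ∀ b a, r (b * f a) = r b * a) :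
    IsNoetherianRing A := by
  have hcomap (I : Ideal A) : (I.map f).comap f = I := by
    refine le_antisymm (fun x hx => ?_) Ideal.le_comap_map
    have hr : r (f x) ∈ I := by
      refine Submodule.closure_induction (p := fun y _ => r y ∈ I) ?_ ?_ ?_ hx
      · rw [map_zero]
        exact zero_mem I
      · intro y z _ _ hy hz
        rw [map_add]
        exact add_mem hy hz
      · rintro b _ ⟨a, ha, rfl⟩
        rw [smul_eq_mul, hmul]
        exact I.mul_mem_left _ ha
    rwa [← one_mul (f x), hmul, hone, one_mul] at hr
  have hmono : StrictMono (Ideal.map f) :=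
    Monotone.strictMono_of_injective (fun _ _ => Ideal.map_mono)
      (Function.LeftInverse.injective hcomap)
  rw [isNoetherianRing_iff, isNoetherian_iff']
  exact hmono.wellFoundedGT

theorem exists_basis_sumLex {R M σ τ : Type*} [Ring R] [AddCommGroup M] [Module R M]
    {V W : Submodule R M} (hVW : IsCompl V W) (bV : Basis σ R V) (bW : Basis τ R W) :
    ∃ b : Basis (σ ⊕ₗ τ) R M, ∀ j, b (Sum.inrₗ j) = bW j :=
  ⟨((bV.prod bW).map (V.prodEquivOfIsCompl W hVW)).reindex toLex, fun j => by simp [Sum.inrₗ]⟩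

variable {R L : Type*} [CommRing R] [LieRing L] [LieAlgebra R L]

theorem isNoetherianRing_envelopingAlgebra_lieSubalgebra
    [IsNoetherianRing (UniversalEnvelopingAlgebra R L)] (q : LieSubalgebra R L) {V : Submodule R L}
    (hV : IsCompl V q.toSubmodule) [Module.Free R V] [Module.Free R q] :
    IsNoetherianRing (UniversalEnvelopingAlgebra R q) := by
  let _ : LinearOrder (Free.ChooseBasisIndex R V) := IsWellOrder.linearOrder WellOrderingRel
  let _ : LinearOrder (Free.ChooseBasisIndex R q) := IsWellOrder.linearOrder WellOrderingRel
  let bq : Basis _ R q := Free.chooseBasis R q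
  obtain ⟨b, hb⟩ := exists_basis_sumLex hV (Free.chooseBasis R V) bq
  have hincl (j) : q.incl (bq j) = b (Sum.inrₗ j) := (hb j).symm
  exact isNoetherianRing_of_retraction (envelopingMap q.incl).toRingHom
    (retraction b bq).toAddMonoidHom (retraction_one hincl) (retraction_mul_envelopingMap hincl)

theorem isNoetherianRing_envelopingAlgebra_quotient
    [IsNoetherianRing (UniversalEnvelopingAlgebra R L)] (m : LieIdeal R L) :
    IsNoetherianRing (UniversalEnvelopingAlgebra R (L ⧸ m)) := by
  let π : L →ₗ⁅R⁆ L ⧸ m :=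
    { (LieSubmodule.Quotient.mk' m : L →ₗ[R] L ⧸ m) with
      map_lie' := fun {X Y} => LieSubmodule.Quotient.mk_bracket m X Y }
  have hπ : Function.Surjective π := LieSubmodule.Quotient.surjective_mk' m
  exact isNoetherianRing_of_surjective _ _ (envelopingMap π).toRingHom (envelopingMap_surjective hπ)

end Noetherian

end PoincareBirkhoffWitt

theorem noetherian_uea_section_general {R L : Type*} [CommRing R] [LieRing L] [LieAlgebra R L]
    [IsNoetherianRing (UniversalEnvelopingAlgebra R L)] (q : LieSubalgebra R L) {V : Submodule R L}
    (hV : IsCompl V q.toSubmodule) [Module.Free R V] [Module.Free R q] (m : LieIdeal R q) :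
    IsNoetherianRing (UniversalEnvelopingAlgebra R (q ⧸ m)) :=
  have := PoincareBirkhoffWitt.isNoetherianRing_envelopingAlgebra_lieSubalgebra q hV
  PoincareBirkhoffWitt.isNoetherianRing_envelopingAlgebra_quotient m

/-- If `U(L)` is left Noetherian then the enveloping algebra of any section `q ⧸ m`
of `L` (with `q` a Lie subalgebra of `L` and `m` a Lie ideal of `q`) is left Noetherian. -/
theorem noetherian_uea_section
    (K : Type*) [Field K] [CharZero K]
    (L : Type*) [LieRing L] [LieAlgebra K L]
    (hNoeth : IsNoetherianRing (UniversalEnvelopingAlgebra K L))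
    (q : LieSubalgebra K L) (m : LieIdeal K q) :
    IsNoetherianRing (UniversalEnvelopingAlgebra K (q ⧸ m)) := by
  obtain ⟨V, hV⟩ := q.toSubmodule.exists_isCompl
  exact noetherian_uea_section_general q hV.symm m
end

section
/- Let K be a field of characteristic 0 and L a Lie algebra over K whose universal enveloping algebra U(L) is left Noetherian. Then every abelian Lie subalgebra of L is finite-dimensional. -/
/-!
Every Lie subalgebra `b` of `L` can be recovered from the left ideal `U(L) b`: the module
`U(L) ⊗_{U(b)} K` induced from the trivial module has a vector whose annihilator in `L` is exactly
`b`, so `U(L) b ∩ L = b`. Hence a left Noetherian `U(L)` forces the ascending chain condition on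
Lie subalgebras of `L`, and every subspace of an abelian subalgebra is a Lie subalgebra.

The induced module is built by hand as in the Poincaré–Birkhoff–Witt theorem, on the monomials in
an ordered basis of a complement of `b`.
-/

universe u

section Curvature

variable {R L M : Type*} [CommRing R] [LieRing L] [LieAlgebra R L] [AddCommGroup M] [Module R M]

/-- The curvature `(x, y) ↦ [ρ x, ρ y] - ρ [x, y]` of a linear map `ρ : L → End M`, which vanishes
when `ρ` is a representation. The commutator is written out to avoid a Lie ring structure on
`End M`. -/
def curvature (ρ : L →ₗ[R] Module.End R M) : L →ₗ[R] L →ₗ[R] Module.End R M :=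
  LinearMap.mk₂ R (fun x y => ρ x * ρ y - ρ y * ρ x - ρ ⁅x, y⁆)
    (fun x x' y => by simp only [map_add, add_lie, add_mul, mul_add]; abel)
    (fun c x y => by simp only [map_smul, smul_lie, smul_mul_assoc, mul_smul_comm, smul_sub])
    (fun x y y' => by simp only [map_add, lie_add, add_mul, mul_add]; abel)
    (fun c x y => by simp only [map_smul, lie_smul, smul_mul_assoc, mul_smul_comm, smul_sub])

variable (ρ : L →ₗ[R] Module.End R M)

theorem curvature_apply (x y : L) (v : M) :
    curvature ρ x y v = ρ x (ρ y v) - ρ y (ρ x v) - ρ ⁅x, y⁆ v :=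
  rfl

theorem curvature_self (x : L) : curvature ρ x x = 0 := by
  ext v
  simp [curvature_apply]

theorem curvature_swap (x y : L) : curvature ρ y x = -curvature ρ x y := by
  ext v
  rw [LinearMap.neg_apply, curvature_apply, curvature_apply, ← lie_skew, map_neg,
    LinearMap.neg_apply]
  abel

theorem curvature_apply_apply_eq_zero {x y z : L} {v : M} (hv : ∀ x y, curvature ρ x y v = 0)
    (hx : curvature ρ y z (ρ x v) = 0) (hy : curvature ρ x z (ρ y v) = 0) :
    curvature ρ x y (ρ z v) = 0 := by
  have hz : ρ z (curvature ρ x y v) = 0 := by rw [hv, map_zero]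
  have hxyz := hv x ⁅y, z⁆
  have hyxz := hv y ⁅x, z⁆
  have hxy_z := hv ⁅x, y⁆ z
  have hyz := congrArg (ρ x) (hv y z)
  have hxz := congrArg (ρ y) (hv x z)
  have jacobi : ρ ⁅⁅x, y⁆, z⁆ v = ρ ⁅x, ⁅y, z⁆⁆ v - ρ ⁅y, ⁅x, z⁆⁆ v := by
    rw [lie_lie, map_sub, LinearMap.sub_apply]
  simp only [curvature_apply, map_sub, map_zero] at hx hy hz hxyz hyxz hxy_z hyz hxz ⊢
  linear_combination (norm := module) hz + hy - hx + hxyz - hyxz - hxy_z + hyz - hxz - jacobi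

theorem curvature_apply_eq_zero_of_basis {α : Type*} (B : Module.Basis α R L) {v : M}
    (h : ∀ a b, curvature ρ (B a) (B b) v = 0) (x y : L) : curvature ρ x y v = 0 := by
  have hzero : (curvature ρ).compr₂ (LinearMap.applyₗ v) = 0 := LinearMap.ext_basis B B h
  exact LinearMap.congr_fun₂ hzero x y

end Curvature

section LinearAlgebra

variable {R M ι κ : Type*} [CommRing R] [AddCommGroup M] [Module R M]

theorem linearCombination_mem {N : Submodule R M} {f : ι → M} {w : ι →₀ R}
    (h : ∀ u ∈ w.support, f u ∈ N) : Finsupp.linearCombination R f w ∈ N :=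
  N.sum_mem fun u hu => N.smul_mem _ (h u hu)

theorem apply_eq_zero_of_forall_mem_support {f : (ι →₀ R) →ₗ[R] M} {w : ι →₀ R}
    (h : ∀ u ∈ w.support, f (Finsupp.single u 1) = 0) : f w = 0 := by
  have hf : f = Finsupp.linearCombination R fun u => f (Finsupp.single u 1) := by
    ext u
    simp
  rw [hf]
  exact linearCombination_mem (N := ⊥) h

theorem mem_span_range_inr_iff (B : Module.Basis (ι ⊕ κ) R M) {x : M} :
    x ∈ Submodule.span R (Set.range (B ∘ Sum.inr)) ↔ ∀ i, B.repr x (.inl i) = 0 := by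
  rw [Set.range_comp, B.mem_span_image]
  refine ⟨fun h i => ?_, fun h a ha => ?_⟩
  · by_contra hi
    simpa using h (Finsupp.mem_support_iff.2 hi)
  · cases a with
    | inl i => exact absurd (h i) (Finsupp.mem_support_iff.1 ha)
    | inr k => exact ⟨k, rfl⟩

theorem exists_basis_sum_span_range_inr_eq {K : Type*} {V : Type u} [DivisionRing K]
    [AddCommGroup V] [Module K V] (W : Submodule K V) :
    ∃ (s t : Type u) (B : Module.Basis (s ⊕ t) K V),
      Submodule.span K (Set.range (B ∘ Sum.inr)) = W := by
  obtain ⟨W', hW'⟩ := W.exists_isCompl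
  let C := Module.Basis.ofVectorSpace K W
  let C' := Module.Basis.ofVectorSpace K W'
  let B := (C'.prod C).map (W'.prodEquivOfIsCompl W hW'.symm)
  have hB : B ∘ Sum.inr = W.subtype ∘ C := by
    ext k
    simp [B]
  refine ⟨_, _, B, ?_⟩
  rw [hB, Set.range_comp, Submodule.span_image, C.span_eq, Submodule.map_top,
    Submodule.range_subtype]

end LinearAlgebra

section InducedAction

variable {R L ι κ : Type*} [CommRing R] [LieRing L] [LieAlgebra R L] [LinearOrder ι]

theorem eq_zero_or_exists_cons_of_le (s : Multiset ι) :
    s = 0 ∨ ∃ j t, s = j ::ₘ t ∧ ∀ i ∈ t, j ≤ i := by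
  cases hs : s.sort with
  | nil => exact .inl (by rw [← s.sort_eq (· ≤ ·), hs, Multiset.coe_nil])
  | cons j t =>
    have hsorted : (j :: t).Pairwise (· ≤ ·) := hs ▸ s.pairwise_sort (· ≤ ·)
    exact .inr ⟨j, t, by rw [← s.sort_eq (· ≤ ·), hs, Multiset.cons_coe],
      (List.pairwise_cons.1 hsorted).1⟩

/-- The order of a basis index in `ι` relative to one in `ι ⊕ κ`, where the elements of `κ` come
after those of `ι`. It decides which products need reordering. -/
def Precedes (j : ι) : ι ⊕ κ → Prop
  | .inl i => j < i
  | .inr _ => True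

theorem not_precedes_iff {j : ι} {a : ι ⊕ κ} : ¬ Precedes j a ↔ ∃ i, a = .inl i ∧ i ≤ j := by
  cases a <;> simp [Precedes]

theorem exists_le_of_not_precedes {j : ι} {t : Multiset ι} {a : ι ⊕ κ} (ht : ∀ l ∈ t, j ≤ l)
    (hja : ¬ Precedes j a) : ∃ i, a = .inl i ∧ ∀ l ∈ j ::ₘ t, i ≤ l := by
  obtain ⟨i, rfl, hij⟩ := not_precedes_iff.1 hja
  exact ⟨i, rfl, Multiset.forall_mem_cons.2 ⟨hij, fun l hl => hij.trans (ht l hl)⟩⟩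

variable (R) in
/-- The leading part of the action of the basis element of index `a` on the monomial `s`:
multiplication by the variable `a` for `a` in `ι`, and zero for `a` in `κ`. -/
noncomputable def symbolAction (a : ι ⊕ κ) (s : Multiset ι) : Multiset ι →₀ R :=
  a.elim (fun i => Finsupp.single (i ::ₘ s) 1) 0

variable (B : Module.Basis (ι ⊕ κ) R L)

open Classical in
/-- The action of the basis element `B a` on the monomial `s`, in the module induced from the
trivial module of the span of the `κ`-part of `B`. The module is realised on polynomials in the
`ι`-part, with a multiset standing for its ordered monomial. If `j` is the least factor of
`s = j t` and precedes `a`, the recursion is `a (j t) = j (a t) + [a, j] t`. The only term of `a t`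
of the same degree as `s` is the monomial `a t`, on which `j` acts by multiplication; the test on
degrees separates it from the terms to which the recursion applies. -/
noncomputable def inducedMonomialAction (a : ι ⊕ κ) (s : Multiset ι) : Multiset ι →₀ R :=
  match _hs : s.sort with
  | [] => symbolAction R a s
  | j :: t =>
    if Precedes j a then
      Finsupp.linearCombination R
        (fun u : Multiset ι =>
          if _hu : u.card < s.card then inducedMonomialAction (.inl j) u
          else Finsupp.single (j ::ₘ u) 1)
        (inducedMonomialAction a t) +
      Finsupp.linearCombination R (fun b => inducedMonomialAction b t)
        (B.repr ⁅B a, B (.inl j)⁆)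
    else symbolAction R a s
termination_by s.card
decreasing_by all_goals first | assumption | simp [← s.length_sort (· ≤ ·), _hs]

theorem inducedMonomialAction_inl_of_le {i : ι} {s : Multiset ι} (h : ∀ j ∈ s, i ≤ j) :
    inducedMonomialAction B (.inl i) s = Finsupp.single (i ::ₘ s) 1 := by
  rw [inducedMonomialAction]
  split
  · rfl
  · next j t hs =>
    have hj : j ∈ s := by rw [← Multiset.mem_sort (r := (· ≤ ·)), hs]; exact List.mem_cons_self
    have hji : ¬ Precedes (κ := κ) j (.inl i) := (h j hj).not_gt
    rw [if_neg hji]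
    rfl

theorem inducedMonomialAction_inr_zero (k : κ) : inducedMonomialAction B (.inr k) 0 = 0 := by
  rw [inducedMonomialAction]
  split
  · rfl
  · next hs => simp at hs

theorem inducedMonomialAction_cons {a : ι ⊕ κ} {j : ι} {t : Multiset ι} (ht : ∀ i ∈ t, j ≤ i)
    (hja : Precedes j a) : inducedMonomialAction B a (j ::ₘ t) =
      Finsupp.linearCombination R
        (fun u : Multiset ι =>
          if u.card ≤ t.card then inducedMonomialAction B (.inl j) u
          else Finsupp.single (j ::ₘ u) 1)
        (inducedMonomialAction B a t) +
      Finsupp.linearCombination R (fun b => inducedMonomialAction B b t)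
        (B.repr ⁅B a, B (.inl j)⁆) := by
  rw [inducedMonomialAction]
  split
  · next hs => simp [Multiset.sort_cons _ _ _ ht] at hs
  · next hs =>
    rw [Multiset.sort_cons _ _ _ ht] at hs
    obtain ⟨rfl, rfl⟩ := List.cons.inj hs
    simp only [if_pos hja, Multiset.sort_eq, Multiset.card_cons, Order.lt_add_one_iff,
      dite_eq_ite]

theorem card_le_or_eq_cons_of_mem_support_inducedMonomialAction {a : ι ⊕ κ} {s u : Multiset ι}
    (hu : u ∈ (inducedMonomialAction B a s).support) :
    u.card ≤ s.card ∨ ∃ i, a = .inl i ∧ u = i ::ₘ s := by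
  suffices h : inducedMonomialAction B a s ∈
      Finsupp.supported R R {u | u.card ≤ s.card ∨ ∃ i, a = .inl i ∧ u = i ::ₘ s} from h hu
  clear hu
  induction hn : s.card using Nat.strong_induction_on generalizing a s with
  | _ n ih =>
    subst hn
    by_cases hleast : ∃ i, a = .inl i ∧ ∀ j ∈ s, i ≤ j
    · obtain ⟨i, rfl, hi⟩ := hleast
      rw [inducedMonomialAction_inl_of_le B hi]
      exact Finsupp.single_mem_supported R 1 (.inr ⟨i, rfl, rfl⟩)
    rcases eq_zero_or_exists_cons_of_le s with rfl | ⟨j, t, rfl, ht⟩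
    · cases a with
      | inl i => simp at hleast
      | inr k => rw [inducedMonomialAction_inr_zero]; exact zero_mem _
    have hja : Precedes j a := by_contra fun hja => hleast (exists_le_of_not_precedes ht hja)
    have card_lt : t.card < (j ::ₘ t).card := by simp
    have raise (b : ι ⊕ κ) {u : Multiset ι} (hu : u.card ≤ t.card) :
        inducedMonomialAction B b u ∈ Finsupp.supported R R
          {u | u.card ≤ (j ::ₘ t).card ∨ ∃ i, a = .inl i ∧ u = i ::ₘ j ::ₘ t} := by
      refine Finsupp.supported_mono ?_ (ih u.card (hu.trans_lt card_lt) rfl)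
      rintro v (hv | ⟨i, -, rfl⟩)
      · exact .inl (hv.trans (hu.trans card_lt.le))
      · exact .inl (by simpa using hu)
    rw [inducedMonomialAction_cons B ht hja]
    refine add_mem (linearCombination_mem fun u hu => ?_)
      (linearCombination_mem fun b _ => raise b le_rfl)
    split_ifs with hcard
    · exact raise _ hcard
    · obtain ⟨i, rfl, rfl⟩ := (ih t.card card_lt rfl hu).resolve_left hcard
      exact Finsupp.single_mem_supported R 1 (.inr ⟨i, rfl, Multiset.cons_swap ..⟩)

/-- The bilinear extension of `inducedMonomialAction B`. It is a representation of `L` when the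
`κ`-part of `B` spans a Lie subalgebra. -/
noncomputable def inducedAction : L →ₗ[R] Module.End R (Multiset ι →₀ R) :=
  B.constr R fun a => Finsupp.linearCombination R (inducedMonomialAction B a)

theorem inducedAction_basis (a : ι ⊕ κ) :
    inducedAction B (B a) = Finsupp.linearCombination R (inducedMonomialAction B a) :=
  B.constr_basis R _ a

theorem inducedAction_basis_single (a : ι ⊕ κ) (s : Multiset ι) :
    inducedAction B (B a) (Finsupp.single s 1) = inducedMonomialAction B a s := by
  rw [inducedAction_basis, Finsupp.linearCombination_single, one_smul]

theorem inducedAction_single (x : L) (s : Multiset ι) :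
    inducedAction B x (Finsupp.single s 1) =
      Finsupp.linearCombination R (fun a => inducedMonomialAction B a s) (B.repr x) := by
  conv_lhs => rw [← B.linearCombination_repr x]
  simp only [Finsupp.linearCombination_apply, Finsupp.sum, map_sum, map_smul, LinearMap.sum_apply,
    LinearMap.smul_apply, inducedAction_basis_single]

theorem inducedAction_single_cons {a : ι ⊕ κ} {j : ι} {t : Multiset ι} (ht : ∀ i ∈ t, j ≤ i)
    (hja : Precedes j a) :
    inducedAction B (B a) (Finsupp.single (j ::ₘ t) 1) =
      inducedAction B (B (.inl j)) (inducedAction B (B a) (Finsupp.single t 1)) +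
        inducedAction B ⁅B a, B (.inl j)⁆ (Finsupp.single t 1) := by
  rw [inducedAction_basis_single, inducedAction_basis_single, inducedMonomialAction_cons B ht hja,
    inducedAction_single, inducedAction_basis]
  congr 1
  refine Finset.sum_congr rfl fun u hu => ?_
  dsimp only
  split_ifs with hcard
  · rfl
  · obtain ⟨i, rfl, rfl⟩ :=
      (card_le_or_eq_cons_of_mem_support_inducedMonomialAction B hu).resolve_left hcard
    have hji : j < i := hja
    have hle : ∀ l ∈ i ::ₘ t, j ≤ l := by simpa [hji.le] using ht
    rw [inducedMonomialAction_inl_of_le B hle]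

theorem curvature_inducedAction_inl_of_le {i : ι} {s : Multiset ι} (hi : ∀ j ∈ s, i ≤ j)
    (a : ι ⊕ κ) :
    curvature (inducedAction B) (B a) (B (.inl i)) (Finsupp.single s 1) = 0 := by
  have of_precedes {i : ι} {a : ι ⊕ κ} (hi : ∀ j ∈ s, i ≤ j) (hia : Precedes i a) :
      curvature (inducedAction B) (B a) (B (.inl i)) (Finsupp.single s 1) = 0 := by
    rw [curvature_apply, inducedAction_basis_single B (.inl i),
      inducedMonomialAction_inl_of_le B hi, inducedAction_single_cons B hi hia]
    abel
  by_cases hia : Precedes i a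
  · exact of_precedes hi hia
  obtain ⟨l, rfl, hli⟩ := not_precedes_iff.1 hia
  rcases hli.eq_or_lt with rfl | hlt
  · rw [curvature_self, LinearMap.zero_apply]
  · have hil := of_precedes (a := .inl i) (fun j hj => hli.trans (hi j hj)) hlt
    rw [curvature_swap, LinearMap.neg_apply, hil, neg_zero]

theorem inducedAction_single_zero_eq_zero_iff {x : L} :
    inducedAction B x (Finsupp.single 0 1) = 0 ↔
      x ∈ Submodule.span R (Set.range (B ∘ Sum.inr)) := by
  refine ⟨fun h => (mem_span_range_inr_iff B).2 fun i => ?_, fun h => ?_⟩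
  · have hcoeff : Finsupp.lapply {i} ∘ₗ (inducedAction B).flip (Finsupp.single 0 1) =
        Finsupp.lapply (.inl i) ∘ₗ B.repr.toLinearMap := by
      refine B.ext fun a => ?_
      cases a <;> simp [inducedAction_basis_single, inducedMonomialAction_inl_of_le,
        inducedMonomialAction_inr_zero, Finsupp.single_apply,
        Finsupp.single_apply_left Sum.inl_injective]
    simpa [h] using (LinearMap.congr_fun hcoeff x).symm
  · suffices Submodule.span R (Set.range (B ∘ Sum.inr)) ≤
        LinearMap.ker ((inducedAction B).flip (Finsupp.single 0 1)) from this h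
    rw [Submodule.span_le]
    rintro _ ⟨k, rfl⟩
    exact (inducedAction_basis_single B _ _).trans (inducedMonomialAction_inr_zero B k)

theorem curvature_inducedAction_single_cons {j : ι} {t : Multiset ι} (ht : ∀ i ∈ t, j ≤ i)
    (flat : ∀ u : Multiset ι, u.card ≤ t.card →
      ∀ x y, curvature (inducedAction B) x y (Finsupp.single u 1) = 0)
    {a b : ι ⊕ κ} (hja : Precedes j a) (hjb : Precedes j b) :
    curvature (inducedAction B) (B a) (B b) (Finsupp.single (j ::ₘ t) 1) = 0 := by
  have flat_inl (c : ι ⊕ κ) {d : ι ⊕ κ} (hjd : Precedes j d) :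
      curvature (inducedAction B) (B c) (B (.inl j))
        (inducedAction B (B d) (Finsupp.single t 1)) = 0 := by
    rw [inducedAction_basis_single]
    refine apply_eq_zero_of_forall_mem_support fun u hu => ?_
    rcases card_le_or_eq_cons_of_mem_support_inducedMonomialAction B hu with hcard | ⟨i, rfl, rfl⟩
    · exact flat u hcard _ _
    · have hji : j < i := hjd
      exact curvature_inducedAction_inl_of_le B (by simpa [hji.le] using ht) c
  rw [← inducedMonomialAction_inl_of_le B ht, ← inducedAction_basis_single]
  exact curvature_apply_apply_eq_zero _ (flat t le_rfl) (flat_inl b hja) (flat_inl a hjb)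

theorem curvature_inducedAction_basis_single
    (hB : ∀ k l, ⁅B (.inr k), B (.inr l)⁆ ∈ Submodule.span R (Set.range (B ∘ Sum.inr)))
    (a b : ι ⊕ κ) (s : Multiset ι) :
    curvature (inducedAction B) (B a) (B b) (Finsupp.single s 1) = 0 := by
  induction hn : s.card using Nat.strong_induction_on generalizing a b s with
  | _ n ih =>
    subst hn
    by_cases hleast : ∃ i, (a = .inl i ∨ b = .inl i) ∧ ∀ j ∈ s, i ≤ j
    · obtain ⟨i, rfl | rfl, hi⟩ := hleast
      · rw [curvature_swap, LinearMap.neg_apply, curvature_inducedAction_inl_of_le B hi, neg_zero]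
      · exact curvature_inducedAction_inl_of_le B hi a
    rcases eq_zero_or_exists_cons_of_le s with rfl | ⟨j, t, rfl, ht⟩
    · cases a with
      | inl i => exact absurd ⟨i, .inl rfl, by simp⟩ hleast
      | inr k => cases b with
        | inl i => exact absurd ⟨i, .inr rfl, by simp⟩ hleast
        | inr l =>
          have hkl := (inducedAction_single_zero_eq_zero_iff B).2 (hB k l)
          simp [curvature_apply, inducedAction_basis_single, inducedMonomialAction_inr_zero, hkl]
    have precedes (c : ι ⊕ κ) (hc : c = a ∨ c = b) : Precedes j c := by
      by_contra hjc
      obtain ⟨i, rfl, hi⟩ := exists_le_of_not_precedes ht hjc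
      exact hleast ⟨i, hc.imp Eq.symm Eq.symm, hi⟩
    have flat (u : Multiset ι) (hu : u.card ≤ t.card) (x y : L) :
        curvature (inducedAction B) x y (Finsupp.single u 1) = 0 :=
      curvature_apply_eq_zero_of_basis _ B
        (fun c d => ih u.card (hu.trans_lt (by simp)) c d u rfl) x y
    exact curvature_inducedAction_single_cons B ht flat (precedes a (.inl rfl))
      (precedes b (.inr rfl))

end InducedAction

section Envelope

attribute [local instance] LieRing.ofAssociativeRing

variable {R L M ι κ : Type*} [CommRing R] [LieRing L] [LieAlgebra R L]
variable [AddCommGroup M] [Module R M]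

/-- The action `inducedAction B` as a representation of `L`, when the `κ`-part of `B` spans a Lie
subalgebra. -/
noncomputable def inducedRepresentation [LinearOrder ι] (B : Module.Basis (ι ⊕ κ) R L)
    (hB : ∀ k l, ⁅B (.inr k), B (.inr l)⁆ ∈ Submodule.span R (Set.range (B ∘ Sum.inr))) :
    L →ₗ⁅R⁆ Module.End R (Multiset ι →₀ R) where
  __ := inducedAction B
  map_lie' {x y} := by
    refine (sub_eq_zero.1 (?_ : curvature (inducedAction B) x y = 0)).symm
    exact LinearMap.ext fun w => apply_eq_zero_of_forall_mem_support fun s _ =>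
      curvature_apply_eq_zero_of_basis _ B
        (fun a b => curvature_inducedAction_basis_single B hB a b s) x y

theorem apply_eq_zero_of_ι_mem_span {ρ : L →ₗ⁅R⁆ Module.End R M} {v : M} {S : Set L}
    (hS : ∀ y ∈ S, ρ y v = 0) {x : L}
    (hx : UniversalEnvelopingAlgebra.ι R x ∈ Ideal.span (UniversalEnvelopingAlgebra.ι R '' S)) :
    ρ x v = 0 := by
  let annihilator : Ideal (Module.End R M) :=
    LinearMap.ker (LinearMap.toSpanSingleton (Module.End R M) M v)
  have hmem (y : L) : UniversalEnvelopingAlgebra.ι R y ∈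
      annihilator.comap (UniversalEnvelopingAlgebra.lift R ρ) ↔ ρ y v = 0 := by
    rw [Ideal.mem_comap, UniversalEnvelopingAlgebra.lift_ι_apply]
    rfl
  refine (hmem x).1 (Ideal.span_le.2 ?_ hx)
  rintro _ ⟨y, hy, rfl⟩
  exact (hmem y).2 (hS y hy)

theorem ι_mem_span_image_iff {K L : Type*} [Field K] [LieRing L] [LieAlgebra K L]
    {b : LieSubalgebra K L} {x : L} :
    UniversalEnvelopingAlgebra.ι K x ∈ Ideal.span (UniversalEnvelopingAlgebra.ι K '' b) ↔
      x ∈ b := by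
  refine ⟨fun hx => ?_, fun hx => Ideal.subset_span ⟨x, hx, rfl⟩⟩
  classical
  obtain ⟨s, t, B, hBb⟩ := exists_basis_sum_span_range_inr_eq b.toSubmodule
  let : LinearOrder s := linearOrderOfSTO WellOrderingRel
  have mem_b (k : t) : B (.inr k) ∈ b := by
    rw [← LieSubalgebra.mem_toSubmodule, ← hBb]
    exact Submodule.subset_span ⟨k, rfl⟩
  have hB (k l : t) :
      ⁅B (.inr k), B (.inr l)⁆ ∈ Submodule.span K (Set.range (B ∘ Sum.inr)) := by
    rw [hBb]
    exact b.lie_mem (mem_b k) (mem_b l)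
  have annihilates_iff (y : L) :
      inducedRepresentation B hB y (Finsupp.single 0 1) = 0 ↔ y ∈ b := by
    rw [← LieSubalgebra.mem_toSubmodule, ← hBb]
    exact inducedAction_single_zero_eq_zero_iff B
  exact (annihilates_iff x).1
    (apply_eq_zero_of_ι_mem_span (fun y hy => (annihilates_iff y).2 hy) hx)

theorem wellFoundedGT_lieSubalgebra_of_isNoetherianRing_universalEnvelopingAlgebra
    (K L : Type*) [Field K] [LieRing L] [LieAlgebra K L]
    [IsNoetherianRing (UniversalEnvelopingAlgebra K L)] : WellFoundedGT (LieSubalgebra K L) := by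
  let leftIdeal (b : LieSubalgebra K L) : Ideal (UniversalEnvelopingAlgebra K L) :=
    Ideal.span (UniversalEnvelopingAlgebra.ι K '' b)
  have hmono : StrictMono leftIdeal := by
    refine Monotone.strictMono_of_injective
      (fun b c hbc => Ideal.span_mono (Set.image_mono hbc)) fun b c hbc => ?_
    ext x
    rw [← ι_mem_span_image_iff, ← ι_mem_span_image_iff]
    exact iff_of_eq (congrArg (_ ∈ ·) hbc)
  exact hmono.wellFoundedGT

end Envelope

theorem isNoetherian_of_isLieAbelian {R L : Type*} [CommRing R] [LieRing L] [LieAlgebra R L]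
    [WellFoundedGT (LieSubalgebra R L)] (a : LieSubalgebra R L) [IsLieAbelian a] :
    IsNoetherian R a := by
  let toLieSubalgebra (p : Submodule R a) : LieSubalgebra R L :=
    LieSubalgebra.map a.incl { p with lie_mem' := by simp [trivial_lie_zero] }
  have hmono : StrictMono toLieSubalgebra := fun p q hpq =>
    Submodule.map_strictMono_of_injective (f := a.toSubmodule.subtype) Subtype.val_injective hpq
  exact isNoetherian_iff'.2 hmono.wellFoundedGT

theorem finiteDimensional_abelian_subalgebra_of_noetherian_uea_general
    (K : Type*) [Field K] (L : Type*) [LieRing L] [LieAlgebra K L]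
    [IsNoetherianRing (UniversalEnvelopingAlgebra K L)]
    (a : LieSubalgebra K L) [IsLieAbelian a] :
    FiniteDimensional K a :=
  have := wellFoundedGT_lieSubalgebra_of_isNoetherianRing_universalEnvelopingAlgebra K L
  have := isNoetherian_of_isLieAbelian a
  inferInstance

/-- If `U(L)` is left Noetherian (over a field of characteristic zero), then every
abelian Lie subalgebra of `L` is finite-dimensional. -/
theorem finiteDimensional_abelian_subalgebra_of_noetherian_uea
    (K : Type*) [Field K] [CharZero K]
    (L : Type*) [LieRing L] [LieAlgebra K L]
    (hNoeth : IsNoetherianRing (UniversalEnvelopingAlgebra K L))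
    (a : LieSubalgebra K L) (hab : IsLieAbelian a) :
    FiniteDimensional K a :=
  finiteDimensional_abelian_subalgebra_of_noetherian_uea_general K L a
end

section
/- Let L be a Z^n-graded Lie algebra over a field K of characteristic 0 with finite-dimensional homogeneous components, which is graded-simple but not simple as a Lie algebra. Then L contains an infinite-dimensional abelian Lie subalgebra; consequently U(L) is not left Noetherian. -/
/-!
Let `I` be a nontrivial proper ideal of the graded-simple algebra `L`, and let `u ≠ 0` in `I` have
minimal support. The elements of `I` supported in translates of the support of `u` are determined by
one component, and these components fill all of `L` by graded simplicity. This gives a module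
homomorphism `σ : L → I` lifting the identity in degree `0`. As `I ≠ ⊤`, some homogeneous part `θ`
of `σ` of degree `δ ≠ 0` is nonzero, hence injective by a graded Schur lemma. It lies in the
centroid, so for homogeneous `x ≠ 0` the elements `θ ^ p x` commute, and they are linearly
independent because their degrees are distinct.

For the enveloping algebra, the Poincaré–Birkhoff–Witt construction relative to a subalgebra `A`
makes `L` act on `Sym (L ⧸ A)` so that exactly the elements of `A` kill `1`. Hence
`A = {y | ι y ∈ U(L) ι(A)}`, so `A ↦ U(L) ι(A)` is strictly monotone, and if `U(L)` is left
Noetherian then subalgebras of `L` satisfy the ascending chain condition. In an abelian subalgebra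
every subspace is a subalgebra.
-/

namespace GradedLie

section Component
variable {R M G : Type*} [CommRing R] [AddCommGroup M] [Module R M] [DecidableEq G]
  (𝓜 : G → Submodule R M) [DirectSum.Decomposition 𝓜]

/-- The projection of `M` onto its homogeneous part of degree `a`. -/
noncomputable def component (a : G) : M →ₗ[R] M :=
  (𝓜 a).subtype ∘ₗ DirectSum.component R G (fun a ↦ 𝓜 a) a ∘ₗ
    (DirectSum.decomposeLinearEquiv 𝓜).toLinearMap

variable {𝓜}

lemma component_mem (a : G) (m : M) : component 𝓜 a m ∈ 𝓜 a := SetLike.coe_mem _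

lemma component_of_mem {a : G} {m : M} (hm : m ∈ 𝓜 a) : component 𝓜 a m = m :=
  DirectSum.decompose_of_mem_same 𝓜 hm

lemma component_of_mem_ne {a c : G} (hac : a ≠ c) {m : M} (hm : m ∈ 𝓜 a) : component 𝓜 c m = 0 :=
  DirectSum.decompose_of_mem_ne 𝓜 hm hac

variable (𝓜) in
lemma finite_setOf_component_ne_zero (m : M) : {a | component 𝓜 a m ≠ 0}.Finite := by
  classical
  refine (DirectSum.decompose 𝓜 m).support.finite_toSet.subset fun a ha ↦ ?_
  exact DFinsupp.mem_support_iff.mpr fun h ↦ ha congr(($h : M))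

lemma mem_of_component_mem {N : Submodule R M} {m : M} (h : ∀ a, component 𝓜 a m ∈ N) : m ∈ N := by
  classical
  rw [← DirectSum.sum_support_decompose 𝓜 m]
  exact N.sum_mem fun a _ ↦ h a

lemma eq_of_component_eq {m m' : M} (h : ∀ a, component 𝓜 a m = component 𝓜 a m') : m = m' :=
  sub_eq_zero.mp <| (Submodule.mem_bot R).mp <| mem_of_component_mem (𝓜 := 𝓜) fun a ↦ by
    simp [h a]

lemma eq_iSup_inf_of_component_mem {N : Submodule R M}
    (h : ∀ m ∈ N, ∀ a, component 𝓜 a m ∈ N) : N = ⨆ a, N ⊓ 𝓜 a :=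
  le_antisymm
    (fun m hm ↦ mem_of_component_mem (𝓜 := 𝓜) fun a ↦
      le_iSup (fun a ↦ N ⊓ 𝓜 a) a ⟨h m hm a, component_mem a m⟩)
    (iSup_le fun _ ↦ inf_le_left)

end Component

section HasDegree
variable {R M G : Type*} [CommRing R] [AddCommGroup M] [Module R M] {𝓜 : G → Submodule R M}

/-- An endomorphism is homogeneous of degree `δ` if it shifts degrees by `δ`. -/
def HasDegree [Add G] (𝓜 : G → Submodule R M) (δ : G) (f : Module.End R M) : Prop :=
  ∀ ⦃a⦄, ∀ m ∈ 𝓜 a, f m ∈ 𝓜 (a + δ)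

lemma HasDegree.pow_apply_mem [AddMonoid G] {δ : G} {f : Module.End R M}
    (hf : HasDegree 𝓜 δ f) {a : G} {x : M} (hx : x ∈ 𝓜 a) (p : ℕ) :
    (f ^ p) x ∈ 𝓜 (a + p • δ) := by
  induction p with
  | zero => simpa using hx
  | succ p ih =>
    rw [pow_succ', Module.End.mul_apply, succ_nsmul, ← add_assoc]
    exact hf _ ih

variable [DecidableEq G] [DirectSum.Decomposition 𝓜]

lemma HasDegree.component_apply [AddGroup G] {δ : G} {f : Module.End R M} (hf : HasDegree 𝓜 δ f)
    (a : G) (m : M) : component 𝓜 (a + δ) (f m) = f (component 𝓜 a m) := by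
  suffices component 𝓜 (a + δ) ∘ₗ f = f ∘ₗ component 𝓜 a from congr($this m)
  refine DirectSum.decompose_lhom_ext 𝓜 fun c ↦ LinearMap.ext fun ⟨m, hm⟩ ↦ ?_
  change component 𝓜 (a + δ) (f m) = f (component 𝓜 a m)
  rcases eq_or_ne c a with rfl | hca
  · rw [component_of_mem hm, component_of_mem (hf m hm)]
  · rw [component_of_mem_ne hca hm, map_zero,
      component_of_mem_ne (mt add_right_cancel hca) (hf m hm)]

lemma HasDegree.linearIndependent_pow_apply [AddGroup G] [IsAddTorsionFree G] [IsDomain R]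
    [Module.IsTorsionFree R M] {δ : G} {f : Module.End R M} (hf : HasDegree 𝓜 δ f) (hδ : δ ≠ 0)
    (hinj : Function.Injective f) {a : G} {x : M} (hx : x ∈ 𝓜 a) (hx0 : x ≠ 0) :
    LinearIndependent R fun p : ℕ ↦ (f ^ p) x := by
  have hdeg : Function.Injective fun p : ℕ ↦ a + p • δ :=
    (add_right_injective a).comp
      (injective_nsmul_iff_not_isOfFinAddOrder.mpr (not_isOfFinAddOrder_of_isAddTorsionFree hδ))
  refine ((DirectSum.Decomposition.isInternal 𝓜).submodule_iSupIndep.comp hdeg).linearIndependent _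
    (hf.pow_apply_mem hx) fun p ↦ ?_
  rw [Module.End.pow_apply]
  exact ((hinj.iterate p).ne hx0).trans_eq (iterate_map_zero f p)

end HasDegree

section GradedSimple
variable {R M G : Type*} (L : Type*) [CommRing R] [LieRing L] [AddCommGroup M] [Module R M]
  [LieRingModule L M]

/-- A graded Lie module is graded-simple if it has no nontrivial proper graded submodule. -/
def IsGradedSimple (𝓜 : G → Submodule R M) : Prop :=
  ∀ N : LieSubmodule R L M, (N : Submodule R M) = ⨆ a, (N : Submodule R M) ⊓ 𝓜 a → N = ⊥ ∨ N = ⊤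

variable {L} [DecidableEq G] {𝓜 : G → Submodule R M} [DirectSum.Decomposition 𝓜]

lemma IsGradedSimple.eq_bot_or_eq_top (hs : IsGradedSimple L 𝓜) {N : LieSubmodule R L M}
    (hN : ∀ m ∈ N, ∀ a, component 𝓜 a m ∈ N) : N = ⊥ ∨ N = ⊤ :=
  hs N (eq_iSup_inf_of_component_mem hN)

lemma IsGradedSimple.injective [AddGroup G] (hs : IsGradedSimple L 𝓜) {δ : G} {θ : M →ₗ⁅R,L⁆ M}
    (hδ : HasDegree 𝓜 δ (θ : M →ₗ[R] M)) (hθ : θ ≠ 0) : Function.Injective θ := by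
  rw [← LieModuleHom.ker_eq_bot]
  refine (hs.eq_bot_or_eq_top fun m hm a ↦ ?_).resolve_right fun htop ↦ hθ ?_
  · have := hδ.component_apply a m
    rw [LieModuleHom.mem_ker] at hm ⊢
    simpa [hm] using this.symm
  · ext m
    exact LieModuleHom.mem_ker.mp (htop ▸ LieSubmodule.mem_top m)

end GradedSimple

section Window
variable {R L M G : Type*} [CommRing R] [LieRing L] [AddCommGroup M] [Module R M]
  [LieRingModule L M] [AddCommGroup G] [DecidableEq G] (𝓜 : G → Submodule R M)
  [DirectSum.Decomposition 𝓜]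

/-- The elements of `I` whose nonzero components have degrees in `a + S`, where `S` will be a
translate of a minimal support. -/
def window (I : LieSubmodule R L M) (S : Set G) (a : G) : Submodule R M where
  carrier := {y | y ∈ I ∧ ∀ c, component 𝓜 c y ≠ 0 → c - a ∈ S}
  zero_mem' := by simp
  add_mem' {x y} hx hy := by
    refine ⟨add_mem hx.1 hy.1, fun c hc ↦ ?_⟩
    by_contra hcS
    exact hc (by rw [map_add, not_imp_comm.mp (hx.2 c) hcS, not_imp_comm.mp (hy.2 c) hcS, add_zero])
  smul_mem' r x hx :=
    ⟨I.smul_mem r hx.1, fun c hc ↦ hx.2 c fun h0 ↦ hc (by rw [map_smul, h0, smul_zero])⟩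

variable {𝓜} {I : LieSubmodule R L M}

lemma exists_window_component_injective (hI : I ≠ ⊥) : ∃ S : Set G,
    (∃ a, ∃ y ∈ window 𝓜 I S a, component 𝓜 a y ≠ 0) ∧
      ∀ a, ∀ y ∈ window 𝓜 I S a, component 𝓜 a y = 0 → y = 0 := by
  let supp (y : M) : Set G := {c | component 𝓜 c y ≠ 0}
  obtain ⟨w, hwI, hw0⟩ :=
    Submodule.ne_bot_iff _ |>.mp (mt (LieSubmodule.toSubmodule_eq_bot _).mp hI)
  obtain ⟨u, ⟨huI, hu0⟩, humin⟩ :=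
    exists_minimalFor_of_wellFoundedLT (fun y ↦ y ∈ I ∧ y ≠ 0) (fun y ↦ (supp y).ncard)
      ⟨w, hwI, hw0⟩
  obtain ⟨a₀, ha₀⟩ : ∃ a, component 𝓜 a u ≠ 0 := by
    by_contra! h0
    exact hu0 (eq_of_component_eq (𝓜 := 𝓜) fun a ↦ by rw [h0, map_zero])
  refine ⟨{c | component 𝓜 (a₀ + c) u ≠ 0}, ⟨a₀, u, ⟨huI, fun c hc ↦ ?_⟩, ha₀⟩, fun a y hy hya ↦ ?_⟩
  · simpa using hc
  by_contra hy0
  have hss : (fun c ↦ a₀ + (c - a)) '' supp y ⊂ supp u := by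
    refine Set.ssubset_iff_exists.mpr ⟨?_, a₀, ha₀, ?_⟩
    · rintro - ⟨c, hc, rfl⟩
      exact hy.2 c hc
    · rintro ⟨c, hc, hca⟩
      obtain rfl : c = a := sub_eq_zero.mp (add_eq_left.mp hca)
      exact hc hya
  have hlt := Set.ncard_lt_ncard hss (finite_setOf_component_ne_zero 𝓜 u)
  rw [Set.ncard_image_of_injective _ fun c d hcd ↦ sub_left_injective (add_right_injective a₀ hcd)]
    at hlt
  exact hlt.not_ge (humin ⟨hy.1, hy0⟩ hlt.le)

end Window

section GradedModule
variable {R L M G : Type*} [CommRing R] [LieRing L] [LieAlgebra R L] [AddCommGroup M] [Module R M]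
  [LieRingModule L M] [LieModule R L M] [AddCommGroup G]

/-- `M` is a graded module over the Lie algebra `L` graded by `𝓛`. The sum of the `𝓛 b` need not be
direct, and directness for `𝓜` is supplied separately by `DirectSum.Decomposition 𝓜`. -/
structure IsGradedLieModule (𝓛 : G → Submodule R L) (𝓜 : G → Submodule R M) : Prop where
  iSup_eq_top : ⨆ b, 𝓛 b = ⊤
  hasDegree_toEnd : ∀ ⦃b⦄, ∀ z ∈ 𝓛 b, HasDegree 𝓜 b (LieModule.toEnd R L M z)

variable {𝓛 : G → Submodule R L} {𝓜 : G → Submodule R M}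

namespace IsGradedLieModule
variable (h : IsGradedLieModule 𝓛 𝓜)
include h

lemma lie_mem_of_homogeneous {N : Submodule R M}
    (hN : ∀ b, ∀ z ∈ 𝓛 b, ∀ m ∈ N, ⁅z, m⁆ ∈ N) (z : L) {m : M} (hm : m ∈ N) : ⁅z, m⁆ ∈ N := by
  have hz : z ∈ ⨆ b, 𝓛 b := h.iSup_eq_top ▸ Submodule.mem_top
  induction hz using Submodule.iSup_induction' with
  | mem b z hz => exact hN b z hz m hm
  | zero => simp
  | add x y _ _ hx hy => exact add_lie x y m ▸ N.add_mem hx hy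

variable [DecidableEq G] [DirectSum.Decomposition 𝓜]

lemma component_lie {b : G} {z : L} (hz : z ∈ 𝓛 b) (a : G) (m : M) :
    component 𝓜 (a + b) ⁅z, m⁆ = ⁅z, component 𝓜 a m⁆ :=
  (h.hasDegree_toEnd z hz).component_apply a m

lemma exists_lieModuleHom (f : ∀ a, 𝓜 a →ₗ[R] M)
    (hf : ∀ a b, ∀ z ∈ 𝓛 b, ∀ (m : 𝓜 a) (m' : 𝓜 (a + b)), (m' : M) = ⁅z, (m : M)⁆ →
      f (a + b) m' = ⁅z, f a m⁆) :
    ∃ φ : M →ₗ⁅R,L⁆ M, ∀ a (m : 𝓜 a), φ m = f a m := by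
  let φ : M →ₗ[R] M :=
    DirectSum.toModule R G M f ∘ₗ (DirectSum.decomposeLinearEquiv 𝓜).toLinearMap
  have hφ (a) (m : 𝓜 a) : φ m = f a m := by simp [φ]
  suffices hlie : ∀ z m, φ ⁅z, m⁆ = ⁅z, φ m⁆ from ⟨{ φ with map_lie' := hlie _ _ }, hφ⟩
  intro z
  have hz : z ∈ ⨆ b, 𝓛 b := h.iSup_eq_top ▸ Submodule.mem_top
  induction hz using Submodule.iSup_induction' with
  | mem b z hz =>
    suffices φ ∘ₗ LieModule.toEnd R L M z = LieModule.toEnd R L M z ∘ₗ φ from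
      fun m ↦ congr($this m)
    refine DirectSum.decompose_lhom_ext 𝓜 fun a ↦ LinearMap.ext fun m ↦ ?_
    have hzm := hf a b z hz m ⟨_, h.hasDegree_toEnd z hz m m.2⟩ rfl
    exact (hφ _ _).trans (hzm.trans congr(⁅z, $((hφ a m).symm)⁆))
  | zero => simp
  | add x y _ _ hx hy => simp [hx, hy]

lemma exists_homogeneousPart (σ : M →ₗ⁅R,L⁆ M) (δ : G) :
    ∃ θ : M →ₗ⁅R,L⁆ M, HasDegree 𝓜 δ (θ : M →ₗ[R] M) ∧
      ∀ a, ∀ m ∈ 𝓜 a, θ m = component 𝓜 (a + δ) (σ m) := by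
  obtain ⟨θ, hθ⟩ := h.exists_lieModuleHom
    (fun a ↦ component 𝓜 (a + δ) ∘ₗ (σ : M →ₗ[R] M) ∘ₗ (𝓜 a).subtype) fun a b z hz m m' hm' ↦ by
      simp [hm', add_right_comm a b δ, h.component_lie hz]
  replace hθ (a) (m) (hm : m ∈ 𝓜 a) : θ m = component 𝓜 (a + δ) (σ m) := hθ a ⟨m, hm⟩
  exact ⟨θ, fun a m hm ↦ (hθ a m hm).symm ▸ component_mem _ _, hθ⟩

end IsGradedLieModule

variable [DecidableEq G] [DirectSum.Decomposition 𝓜] {I : LieSubmodule R L M}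

lemma IsGradedLieModule.lie_mem_window (h : IsGradedLieModule 𝓛 𝓜) {S : Set G} {a b : G} {z : L}
    (hz : z ∈ 𝓛 b) {y : M} (hy : y ∈ window 𝓜 I S a) : ⁅z, y⁆ ∈ window 𝓜 I S (a + b) := by
  refine ⟨I.lie_mem hy.1, fun c hc ↦ ?_⟩
  rw [← sub_add_cancel c b, h.component_lie hz] at hc
  have := hy.2 (c - b) fun h0 ↦ hc (by rw [h0, lie_zero])
  rwa [sub_sub, add_comm b a] at this

lemma IsGradedLieModule.exists_mem_window_component_eq (h : IsGradedLieModule 𝓛 𝓜)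
    (hs : IsGradedSimple L 𝓜) {S : Set G} {a₀ : G} {u : M} (hu : u ∈ window 𝓜 I S a₀)
    (hua : component 𝓜 a₀ u ≠ 0) (a : G) {m : M} (hm : m ∈ 𝓜 a) :
    ∃ y ∈ window 𝓜 I S a, component 𝓜 a y = m := by
  let lead (a : G) : Submodule R M := (window 𝓜 I S a).map (component 𝓜 a)
  let N₀ : Submodule R M := ⨅ a, (lead a).comap (component 𝓜 a)
  have hN₀ {m : M} : m ∈ N₀ ↔ ∀ a, component 𝓜 a m ∈ lead a := by simp [N₀]
  have hlie (b) (z) (hz : z ∈ 𝓛 b) (m) (hm : m ∈ N₀) : ⁅z, m⁆ ∈ N₀ := hN₀.mpr fun c ↦ by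
    obtain ⟨y, hy, hym⟩ := hN₀.mp hm (c - b)
    refine ⟨⁅z, y⁆, sub_add_cancel c b ▸ h.lie_mem_window hz hy, ?_⟩
    rw [← sub_add_cancel c b, h.component_lie hz, h.component_lie hz, hym]
  let N : LieSubmodule R L M :=
    { N₀ with
      lie_mem {z _} hm := h.lie_mem_of_homogeneous hlie z hm }
  have hcomp {c : G} {y : M} (hy : y ∈ lead c) (hyc : y ∈ 𝓜 c) : y ∈ N := hN₀.mpr fun a ↦ by
    rcases eq_or_ne c a with rfl | hca
    · rwa [component_of_mem hyc]
    · exact component_of_mem_ne hca hyc ▸ zero_mem _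
  have htop : N = ⊤ := by
    refine (hs.eq_bot_or_eq_top fun m hm c ↦ hcomp (hN₀.mp hm c) (component_mem c m)).resolve_left
      fun hbot ↦ hua ?_
    have : component 𝓜 a₀ u ∈ N := hcomp ⟨u, hu, rfl⟩ (component_mem _ _)
    rwa [hbot, LieSubmodule.mem_bot] at this
  have hmN : m ∈ N := htop ▸ LieSubmodule.mem_top m
  exact component_of_mem hm ▸ hN₀.mp hmN a

theorem IsGradedLieModule.exists_lieModuleHom_section (h : IsGradedLieModule 𝓛 𝓜)
    (hs : IsGradedSimple L 𝓜) (hI : I ≠ ⊥) :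
    ∃ σ : M →ₗ⁅R,L⁆ M, ∀ a, ∀ m ∈ 𝓜 a, σ m ∈ I ∧ component 𝓜 a (σ m) = m := by
  obtain ⟨S, ⟨a₀, u, hu, hua⟩, hS⟩ := exists_window_component_injective (𝓜 := 𝓜) hI
  have huniq {a : G} {y y' : M} (hy : y ∈ window 𝓜 I S a) (hy' : y' ∈ window 𝓜 I S a)
      (hyy : component 𝓜 a y = component 𝓜 a y') : y = y' :=
    sub_eq_zero.mp <| hS a _ (sub_mem hy hy') (by rw [map_sub, hyy, sub_self])
  let lead (a : G) : window 𝓜 I S a →ₗ[R] 𝓜 a :=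
    (component 𝓜 a).restrict fun _ _ ↦ component_mem _ _
  have hlead (a : G) : Function.Bijective (lead a) := by
    refine ⟨fun y y' hyy ↦ Subtype.ext (huniq y.2 y'.2 congr(($hyy : M))), fun m ↦ ?_⟩
    obtain ⟨y, hy, hym⟩ := h.exists_mem_window_component_eq hs hu hua a m.2
    exact ⟨⟨y, hy⟩, Subtype.ext hym⟩
  let e (a : G) : window 𝓜 I S a ≃ₗ[R] 𝓜 a := .ofBijective (lead a) (hlead a)
  have he (a : G) (m : 𝓜 a) : component 𝓜 a ((e a).symm m) = m :=
    congr(($((e a).apply_symm_apply m) : M))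
  obtain ⟨σ, hσ⟩ := h.exists_lieModuleHom (fun a ↦ (window 𝓜 I S a).subtype ∘ₗ (e a).symm)
    fun a b z hz m m' hm' ↦
      huniq (SetLike.coe_mem _) (h.lie_mem_window hz (SetLike.coe_mem _)) <| by
        simp [h.component_lie hz, he, hm']
  exact ⟨σ, fun a m hm ↦ hσ a ⟨m, hm⟩ ▸ ⟨((e a).symm ⟨m, hm⟩).2.1, he a ⟨m, hm⟩⟩⟩

theorem IsGradedLieModule.exists_injective_hasDegree (h : IsGradedLieModule 𝓛 𝓜)
    (hs : IsGradedSimple L 𝓜) (hI : I ≠ ⊥) (hI' : I ≠ ⊤) :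
    ∃ δ ≠ 0, ∃ θ : M →ₗ⁅R,L⁆ M, HasDegree 𝓜 δ (θ : M →ₗ[R] M) ∧ Function.Injective θ := by
  obtain ⟨σ, hσ⟩ := h.exists_lieModuleHom_section hs hI
  choose part hdeg hpart using h.exists_homogeneousPart σ
  suffices ∃ δ ≠ 0, part δ ≠ 0 from
    this.imp fun δ ⟨hδ, h0⟩ ↦ ⟨hδ, part δ, hdeg δ, hs.injective (hdeg δ) h0⟩
  by_contra! hzero
  refine hI' (eq_top_iff.mpr fun m _ ↦ ?_)
  refine mem_of_component_mem (𝓜 := 𝓜) (N := (I : Submodule R M)) fun a ↦ ?_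
  set x := component 𝓜 a m
  have hx : x ∈ 𝓜 a := component_mem a m
  have hσx : σ x = x := eq_of_component_eq (𝓜 := 𝓜) fun c ↦ by
    rcases eq_or_ne a c with rfl | hac
    · rw [(hσ a x hx).2, component_of_mem hx]
    · have := hpart (c - a) a x hx
      rw [hzero _ (sub_ne_zero.mpr hac.symm), add_sub_cancel] at this
      rw [component_of_mem_ne hac hx]
      exact this.symm
  exact hσx ▸ (hσ a x hx).1

end GradedModule

section Centroid
variable {R L M : Type*} [CommRing R] [LieRing L]

lemma pow_apply_lie [AddCommGroup M] [Module R M] [LieRingModule L M]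
    (θ : M →ₗ⁅R,L⁆ M) (p : ℕ) (x : L) (m : M) :
    ((θ : Module.End R M) ^ p) ⁅x, m⁆ = ⁅x, ((θ : Module.End R M) ^ p) m⁆ := by
  induction p with
  | zero => rfl
  | succ p ih => simp [pow_succ', ih]

lemma lie_pow_apply_pow_apply_eq_zero [LieAlgebra R L] (θ : L →ₗ⁅R,L⁆ L) (x : L) (p q : ℕ) :
    ⁅((θ : Module.End R L) ^ p) x, ((θ : Module.End R L) ^ q) x⁆ = 0 := by
  rw [← pow_apply_lie, ← lie_skew, ← pow_apply_lie, lie_self, map_zero, neg_zero, map_zero]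

theorem exists_isLieAbelian_not_finiteDimensional {K G : Type*} [Field K] [LieAlgebra K L]
    [AddCommGroup G] [IsAddTorsionFree G] [DecidableEq G] {𝓛 : G → Submodule K L}
    [DirectSum.Decomposition 𝓛] (h : IsGradedLieModule 𝓛 𝓛) (hs : IsGradedSimple L 𝓛)
    {I : LieIdeal K L} (hI : I ≠ ⊥) (hI' : I ≠ ⊤) :
    ∃ A : LieSubalgebra K L, IsLieAbelian A ∧ ¬ FiniteDimensional K A := by
  obtain ⟨δ, hδ, θ, hdeg, hinj⟩ := h.exists_injective_hasDegree hs hI hI'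
  obtain ⟨a, x, hx, hx0⟩ : ∃ a, ∃ x ∈ 𝓛 a, x ≠ 0 := by
    by_contra! h0
    refine hI ((LieSubmodule.eq_bot_iff I).mpr fun y _ ↦ ?_)
    exact eq_of_component_eq (𝓜 := 𝓛) fun a ↦ by rw [h0 a _ (component_mem a y), map_zero]
  let v (p : ℕ) : L := ((θ : Module.End K L) ^ p) x
  have hv : LinearIndependent K v := hdeg.linearIndependent_pow_apply hδ hinj hx hx0
  let A := LieSubalgebra.lieSpan K L (Set.range v)
  refine ⟨A, LieSubalgebra.isLieAbelian_lieSpan_iff.mpr ?_, fun hA ↦ ?_⟩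
  · rintro - ⟨p, rfl⟩ - ⟨q, rfl⟩
    exact lie_pow_apply_pow_apply_eq_zero θ x p q
  · let w (p : ℕ) : A := ⟨v p, LieSubalgebra.subset_lieSpan ⟨p, rfl⟩⟩
    have hw : LinearIndependent K w := .of_comp A.toSubmodule.subtype hv
    have := hw.finite_of_isNoetherian
    exact not_finite ℕ

end Centroid

end GradedLie

namespace PBW

open MvPolynomial

section Degree
variable {I R : Type*} [CommSemiring R]

lemma X_mul_monomial (j : I) (m : I →₀ ℕ) :
    (X j * monomial m 1 : MvPolynomial I R) = monomial (Finsupp.single j 1 + m) 1 := by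
  rw [X, monomial_mul, mul_one]

lemma X_mem_restrictTotalDegree (i : I) : (X i : MvPolynomial I R) ∈ restrictTotalDegree I R 1 := by
  rw [mem_restrictTotalDegree]
  exact (totalDegree_monomial_le _ _).trans_eq (by simp)

lemma restrictTotalDegree_mono {m n : ℕ} (h : m ≤ n) :
    restrictTotalDegree I R m ≤ restrictTotalDegree I R n :=
  restrictSupport_mono R fun _ hk ↦ le_trans hk h

lemma mul_mem_restrictTotalDegree {f g : MvPolynomial I R} {m n : ℕ}
    (hf : f ∈ restrictTotalDegree I R m) (hg : g ∈ restrictTotalDegree I R n) :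
    f * g ∈ restrictTotalDegree I R (m + n) := by
  rw [mem_restrictTotalDegree] at *
  exact (totalDegree_mul f g).trans (add_le_add hf hg)

lemma exists_mem_restrictTotalDegree (f : MvPolynomial I R) : ∃ n, f ∈ restrictTotalDegree I R n :=
  ⟨f.totalDegree, (mem_restrictTotalDegree ..).mpr le_rfl⟩

lemma restrictTotalDegree_zero_le {N : Submodule R (MvPolynomial I R)} (h1 : 1 ∈ N) :
    restrictTotalDegree I R 0 ≤ N := by
  intro f hf
  rw [mem_restrictTotalDegree, Nat.le_zero] at hf
  rw [totalDegree_eq_zero_iff_eq_C.mp hf, C_eq_smul_one]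
  exact N.smul_mem _ h1

end Degree

section LeastVariable
variable {I R : Type*} [LinearOrder I] [CommSemiring R]

/-- The exponents of the monomials in the variables `X i` with `j ≤ i`: those `m` for which
`X j * m` is the ordered product of the Poincaré–Birkhoff–Witt basis. -/
def exponentsGE (j : I) : Set (I →₀ ℕ) := {m | ∀ i ∈ m.support, j ≤ i}

lemma exponentsGE_mono {i j : I} (hij : i ≤ j) : exponentsGE j ⊆ exponentsGE i :=
  fun _ hm k hk ↦ hij.trans (hm k hk)

lemma single_add_mem_exponentsGE {i j : I} {m : I →₀ ℕ} (hij : i ≤ j) (hm : m ∈ exponentsGE i) :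
    Finsupp.single j 1 + m ∈ exponentsGE i := by
  intro k hk
  rcases Finset.mem_union.mp (Finsupp.support_add hk) with hk | hk
  · rwa [Finset.mem_singleton.mp (Finsupp.support_single_subset hk)]
  · exact hm k hk

lemma isLeast_support_single_add {j : I} {m : I →₀ ℕ} (hm : m ∈ exponentsGE j) :
    IsLeast ((Finsupp.single j 1 + m).support : Set I) j :=
  ⟨by simp, single_add_mem_exponentsGE le_rfl hm⟩

lemma exists_eq_single_add {m : I →₀ ℕ} (hm : m ≠ 0) :
    ∃ j, ∃ m' ∈ exponentsGE j, m = Finsupp.single j 1 + m' := by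
  have hs : m.support.Nonempty := Finsupp.support_nonempty_iff.mpr hm
  refine ⟨m.support.min' hs, m - Finsupp.single (m.support.min' hs) 1,
    fun i hi ↦ m.support.min'_le i (Finsupp.support_tsub hi), ?_⟩
  rw [add_tsub_cancel_of_le]
  rw [Finsupp.single_le_iff, Nat.one_le_iff_ne_zero, ← Finsupp.mem_support_iff]
  exact m.support.min'_mem hs

lemma X_mul_mem_restrictSupport {i j : I} (hij : i ≤ j) {f : MvPolynomial I R}
    (hf : f ∈ restrictSupport R (exponentsGE i)) :
    X j * f ∈ restrictSupport R (exponentsGE i) := by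
  suffices restrictSupport R (exponentsGE i) ≤
    (restrictSupport R (exponentsGE i)).comap (LinearMap.mulLeft R (X j)) from this hf
  rw [restrictSupport_eq_span (R := R), Submodule.span_le, ← restrictSupport_eq_span]
  rintro - ⟨m, hm, rfl⟩
  simp only [SetLike.mem_coe, Submodule.mem_comap, LinearMap.mulLeft_apply, X_mul_monomial]
  exact (monomial_mem_restrictSupport R).mpr (.inl (single_add_mem_exponentsGE hij hm))

lemma restrictTotalDegree_succ_le {N : Submodule R (MvPolynomial I R)} {n : ℕ} (h1 : 1 ∈ N)
    (hX : ∀ j, ∀ f ∈ restrictSupport R (exponentsGE j), f ∈ restrictTotalDegree I R n →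
      X j * f ∈ N) :
    restrictTotalDegree I R (n + 1) ≤ N := by
  rw [restrictTotalDegree, restrictSupport_eq_span, Submodule.span_le]
  rintro - ⟨m, hm, rfl⟩
  rcases eq_or_ne m 0 with rfl | hm0
  · exact h1
  obtain ⟨j, m, hmj, rfl⟩ := exists_eq_single_add hm0
  have hdeg : m.degree ≤ n := by
    have : (Finsupp.single j 1 + m).degree ≤ n + 1 := hm
    rw [map_add, Finsupp.degree_single] at this
    lia
  simp only [SetLike.mem_coe, ← X_mul_monomial]
  exact hX j _ ((monomial_mem_restrictSupport R).mpr (.inl hmj))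
    ((monomial_mem_restrictSupport R).mpr (.inl hdeg))

end LeastVariable

section Quotient
variable {R L I : Type*} [CommRing R] [LieRing L] [LieAlgebra R L] {A : LieSubalgebra R L}
  (b : Module.Basis I R (L ⧸ A.toSubmodule))

/-- A representative in `L` of the `i`-th vector of a basis of `L ⧸ A`. -/
noncomputable def rep (i : I) : L := (b i).out

/-- The class of an element of `L` in `L ⧸ A`, viewed as a linear form in the polynomial ring
`Sym (L ⧸ A)`: the top-degree part of its action is multiplication by this form. -/
noncomputable def symbol : L →ₗ[R] MvPolynomial I R := b.constr R X ∘ₗ A.toSubmodule.mkQ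

lemma mk_rep (i : I) : (Submodule.Quotient.mk (rep b i) : L ⧸ A.toSubmodule) = b i :=
  Quotient.out_eq' _

lemma symbol_rep (i : I) : symbol b (rep b i) = X i := by simp [symbol, mk_rep]

lemma symbol_eq_zero_iff {y : L} : symbol b y = 0 ↔ y ∈ A := by
  have hinj := b.injective_constr_of_linearIndependent (R₂ := R) (linearIndependent_X I R)
  rw [symbol, LinearMap.comp_apply, map_eq_zero_iff _ hinj, Submodule.mkQ_apply,
    Submodule.Quotient.mk_eq_zero, LieSubalgebra.mem_toSubmodule]

lemma mem_of_rep_mem {N : Submodule R L} (hrep : ∀ i, rep b i ∈ N) (hA : A.toSubmodule ≤ N)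
    (y : L) : y ∈ N := by
  have hmap : N.map A.toSubmodule.mkQ = ⊤ := by
    rw [eq_top_iff, ← b.span_eq, Submodule.span_le]
    rintro - ⟨i, rfl⟩
    exact ⟨rep b i, hrep i, mk_rep b i⟩
  have hcomap := Submodule.comap_map_mkQ A.toSubmodule N
  rw [hmap, Submodule.comap_top, sup_eq_right.mpr hA] at hcomap
  exact hcomap ▸ Submodule.mem_top

lemma symbol_mem_restrictTotalDegree (y : L) : symbol b y ∈ restrictTotalDegree I R 1 := by
  refine mem_of_rep_mem b (N := (restrictTotalDegree I R 1).comap (symbol b))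
    (fun i ↦ ?_) (fun a ha ↦ ?_) y
  · rw [Submodule.mem_comap, symbol_rep]
    exact X_mem_restrictTotalDegree i
  · rw [Submodule.mem_comap, (symbol_eq_zero_iff b).mpr ha]
    exact zero_mem _

end Quotient

section Action
variable {R L I : Type*} [CommRing R] [LieRing L] [LieAlgebra R L] {A : LieSubalgebra R L}
  [LinearOrder I] (b : Module.Basis I R (L ⧸ A.toSubmodule))

/-- The element obtained from `y` by deleting the components along `rep b i` for `i ≤ j`, which
act on monomials with least variable `X j` by plain multiplication. -/
noncomputable def tail (j : I) : L →ₗ[R] L :=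
  LinearMap.id - (b.constr R fun i ↦ if i ≤ j then rep b i else 0) ∘ₗ A.toSubmodule.mkQ

lemma tail_rep (i j : I) : tail b j (rep b i) = if i ≤ j then 0 else rep b i := by
  split_ifs with h <;> simp [tail, h, mk_rep]

lemma tail_of_mem (j : I) {a : L} (ha : a ∈ A) : tail b j a = a := by
  simp [tail, (Submodule.Quotient.mk_eq_zero A.toSubmodule).mpr ha]

lemma tail_tail (j : I) (y : L) : tail b j (tail b j y) = tail b j y := by
  refine mem_of_rep_mem b (N := LinearMap.eqLocus (tail b j ∘ₗ tail b j) (tail b j))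
    (fun i ↦ ?_) (fun a ha ↦ ?_) y
  · by_cases hij : i ≤ j <;> simp [tail_rep, hij]
  · simp [tail_of_mem b j ha]

lemma symbol_tail_mul_mem {j : I} {f : MvPolynomial I R}
    (hf : f ∈ restrictSupport R (exponentsGE j)) (y : L) :
    symbol b (tail b j y) * f ∈ restrictSupport R (exponentsGE j) := by
  refine mem_of_rep_mem b (N := (restrictSupport R (exponentsGE j)).comap
    (LinearMap.mulRight R f ∘ₗ symbol b ∘ₗ tail b j)) (fun i ↦ ?_) (fun a ha ↦ ?_) y
  · by_cases hij : i ≤ j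
    · simp [tail_rep, hij]
    · simpa [tail_rep, hij, symbol_rep] using X_mul_mem_restrictSupport (le_of_not_ge hij) hf
  · simp [tail_of_mem b j ha, (symbol_eq_zero_iff b).mpr ha]

/-- The action of `y` on the monomial `m = X j * z`, `j` being its least variable, when `φ` is the
action on polynomials of lower degree. The part of `y` removed by `tail b j` acts by multiplication,
and the rest by `y (X j * z) = X j (y z) + ⁅y, X j⁆ z`. The leading term `symbol b y * m` is split
off, so that `φ` is only needed below the degree of `m`. -/
noncomputable def actionStep (φ : L →ₗ[R] MvPolynomial I R →ₗ[R] MvPolynomial I R) (m : I →₀ ℕ) :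
    L →ₗ[R] MvPolynomial I R :=
  LinearMap.mulRight R (monomial m 1) ∘ₗ symbol b +
    if h : m.support.Nonempty then
      let j := m.support.min' h
      let z := monomial (m - Finsupp.single j 1) (1 : R)
      (φ (rep b j) ∘ₗ (φ.flip z - LinearMap.mulRight R z ∘ₗ symbol b) +
        φ.flip z ∘ₗ (LieAlgebra.ad R L : L →ₗ[R] Module.End R L).flip (rep b j)) ∘ₗ tail b j
    else 0

/-- The action of `L` on the polynomials of degree at most `n`. -/
noncomputable def approxAction : ℕ → L →ₗ[R] MvPolynomial I R →ₗ[R] MvPolynomial I R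
  | 0 => LinearMap.mul R (MvPolynomial I R) ∘ₗ symbol b
  | n + 1 => ((basisMonomials I R).constr R (actionStep b (approxAction n))).flip

lemma approxAction_succ_monomial (n : ℕ) (y : L) (m : I →₀ ℕ) :
    approxAction b (n + 1) y (monomial m 1) = actionStep b (approxAction b n) m y := by
  rw [approxAction, LinearMap.flip_apply]
  exact congr($((basisMonomials I R).constr_basis R (actionStep b (approxAction b n)) m) y)

lemma approxAction_one (n : ℕ) (y : L) : approxAction b n y 1 = symbol b y := by
  cases n with
  | zero => simp [approxAction]
  | succ n => simpa [actionStep] using approxAction_succ_monomial b n y 0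

lemma approxAction_succ_X_mul (n : ℕ) {j : I} {f : MvPolynomial I R}
    (hf : f ∈ restrictSupport R (exponentsGE j)) (y : L) :
    approxAction b (n + 1) y (X j * f) = symbol b y * (X j * f) +
      (approxAction b n (rep b j)
        (approxAction b n (tail b j y) f - symbol b (tail b j y) * f) +
      approxAction b n ⁅tail b j y, rep b j⁆ f) := by
  let rhs : MvPolynomial I R →ₗ[R] MvPolynomial I R :=
    LinearMap.mulLeft R (symbol b y) ∘ₗ LinearMap.mulLeft R (X j) +
      (approxAction b n (rep b j) ∘ₗ
        (approxAction b n (tail b j y) - LinearMap.mulLeft R (symbol b (tail b j y))) +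
      approxAction b n ⁅tail b j y, rep b j⁆)
  suffices restrictSupport R (exponentsGE j) ≤
      LinearMap.eqLocus (approxAction b (n + 1) y ∘ₗ LinearMap.mulLeft R (X j)) rhs from this hf
  rw [restrictSupport_eq_span, Submodule.span_le]
  rintro - ⟨m, hm, rfl⟩
  have hleast := isLeast_support_single_add hm
  have hne : (Finsupp.single j 1 + m).support.Nonempty := ⟨j, hleast.1⟩
  have hmin : (Finsupp.single j 1 + m).support.min' hne = j :=
    (Finset.isLeast_min' _ hne).unique hleast
  simp only [SetLike.mem_coe, LinearMap.mem_eqLocus, LinearMap.comp_apply,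
    LinearMap.mulLeft_apply, X_mul_monomial, approxAction_succ_monomial, rhs]
  simp [actionStep, hne, hmin, X_mul_monomial]

lemma approxAction_sub_mem (n d : ℕ) (y : L) {f : MvPolynomial I R}
    (hf : f ∈ restrictTotalDegree I R d) :
    approxAction b n y f - symbol b y * f ∈ restrictTotalDegree I R d := by
  induction n generalizing d y f with
  | zero => simp [approxAction]
  | succ n ih =>
    have hact {d : ℕ} {z : L} {g : MvPolynomial I R} (hg : g ∈ restrictTotalDegree I R d) :
        approxAction b n z g ∈ restrictTotalDegree I R (d + 1) := by
      rw [← sub_add_cancel (approxAction b n z g) (symbol b z * g), add_comm d]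
      exact add_mem (restrictTotalDegree_mono (by lia) (ih d z hg))
        (mul_mem_restrictTotalDegree (symbol_mem_restrictTotalDegree b z) hg)
    let N := (restrictTotalDegree I R d).comap
      (approxAction b (n + 1) y - LinearMap.mulLeft R (symbol b y))
    have h1 : 1 ∈ N := by simp [N, approxAction_one]
    suffices restrictTotalDegree I R d ≤ N from this hf
    cases d with
    | zero => exact restrictTotalDegree_zero_le h1
    | succ d =>
      refine restrictTotalDegree_succ_le h1 fun j g hgj hg ↦ ?_
      simp only [N, Submodule.mem_comap, LinearMap.sub_apply, LinearMap.mulLeft_apply,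
        approxAction_succ_X_mul b n hgj, add_sub_cancel_left]
      exact add_mem (hact (ih d _ hg)) (hact hg)

lemma approxAction_succ_eq {n : ℕ} (y : L) {f : MvPolynomial I R}
    (hf : f ∈ restrictTotalDegree I R n) : approxAction b (n + 1) y f = approxAction b n y f := by
  suffices restrictTotalDegree I R n ≤
    LinearMap.eqLocus (approxAction b (n + 1) y) (approxAction b n y) from this hf
  clear hf
  have h1 (n : ℕ) (y : L) :
      1 ∈ LinearMap.eqLocus (approxAction b (n + 1) y) (approxAction b n y) := by
    simp [approxAction_one]
  induction n generalizing y with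
  | zero => exact restrictTotalDegree_zero_le (h1 0 y)
  | succ n ih =>
    refine restrictTotalDegree_succ_le (h1 _ y) fun j g hgj hg ↦ ?_
    have ih (z : L) {g : MvPolynomial I R} (hg : g ∈ restrictTotalDegree I R n) :
        approxAction b (n + 1) z g = approxAction b n z g := ih z hg
    rw [LinearMap.mem_eqLocus, approxAction_succ_X_mul b _ hgj, approxAction_succ_X_mul b _ hgj,
      ih _ hg, ih _ hg, ih _ (approxAction_sub_mem b n n _ hg)]

lemma approxAction_eq_of_le {n d : ℕ} (hd : d ≤ n) (y : L) {f : MvPolynomial I R}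
    (hf : f ∈ restrictTotalDegree I R d) : approxAction b n y f = approxAction b d y f := by
  induction n, hd using Nat.le_induction with
  | base => rfl
  | succ n hn ih => rw [approxAction_succ_eq b y (restrictTotalDegree_mono hn hf), ih]

/-- The linear map underlying the action of `L` on `Sym (L ⧸ A)`. -/
noncomputable def action : L →ₗ[R] MvPolynomial I R →ₗ[R] MvPolynomial I R :=
  ((basisMonomials I R).constr R fun m ↦
    (approxAction b m.degree).flip (monomial m 1)).flip

lemma action_monomial (y : L) (m : I →₀ ℕ) :
    action b y (monomial m 1) = approxAction b m.degree y (monomial m 1) := by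
  rw [action, LinearMap.flip_apply]
  exact congr($((basisMonomials I R).constr_basis R
    (fun m ↦ (approxAction b m.degree).flip (monomial m 1)) m) y)

lemma action_eq_approxAction {n : ℕ} (y : L) {f : MvPolynomial I R}
    (hf : f ∈ restrictTotalDegree I R n) : action b y f = approxAction b n y f := by
  suffices restrictTotalDegree I R n ≤
    LinearMap.eqLocus (action b y) (approxAction b n y) from this hf
  rw [restrictTotalDegree, restrictSupport_eq_span, Submodule.span_le]
  rintro - ⟨m, hm, rfl⟩
  have hdeg : monomial m (1 : R) ∈ restrictTotalDegree I R m.degree :=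
    (monomial_mem_restrictSupport R).mpr (.inl (le_refl m.degree))
  rw [SetLike.mem_coe, LinearMap.mem_eqLocus, action_monomial]
  exact (approxAction_eq_of_le b hm y hdeg).symm

lemma action_one (y : L) : action b y 1 = symbol b y := by
  obtain ⟨n, hn⟩ := exists_mem_restrictTotalDegree (1 : MvPolynomial I R)
  rw [action_eq_approxAction b y hn, approxAction_one]

lemma action_sub_mem {n : ℕ} (y : L) {f : MvPolynomial I R} (hf : f ∈ restrictTotalDegree I R n) :
    action b y f - symbol b y * f ∈ restrictTotalDegree I R n := by
  rw [action_eq_approxAction b y hf]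
  exact approxAction_sub_mem b n n y hf

lemma action_X_mul {j : I} {f : MvPolynomial I R} (hf : f ∈ restrictSupport R (exponentsGE j))
    (y : L) :
    action b y (X j * f) = symbol b y * (X j * f) +
      (action b (rep b j) (action b (tail b j y) f - symbol b (tail b j y) * f) +
        action b ⁅tail b j y, rep b j⁆ f) := by
  obtain ⟨n, hn⟩ := exists_mem_restrictTotalDegree f
  have hXf : X j * f ∈ restrictTotalDegree I R (n + 1) :=
    add_comm n 1 ▸ mul_mem_restrictTotalDegree (X_mem_restrictTotalDegree j) hn
  rw [action_eq_approxAction b y hXf, approxAction_succ_X_mul b n hf,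
    action_eq_approxAction b _ (action_sub_mem b _ hn), action_eq_approxAction b _ hn,
    action_eq_approxAction b _ hn]

lemma action_rep {i : I} {f : MvPolynomial I R} (hf : f ∈ restrictSupport R (exponentsGE i)) :
    action b (rep b i) f = X i * f := by
  suffices restrictSupport R (exponentsGE i) ≤
    LinearMap.eqLocus (action b (rep b i)) (LinearMap.mulLeft R (X i)) from this hf
  rw [restrictSupport_eq_span, Submodule.span_le]
  rintro - ⟨m, hm, rfl⟩
  rcases eq_or_ne m 0 with rfl | hm0
  · exact (action_one b _).trans (by simp [symbol_rep])
  obtain ⟨j, m', hj, rfl⟩ := exists_eq_single_add hm0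
  have hij : i ≤ j := hm j (isLeast_support_single_add hj).1
  simp only [SetLike.mem_coe, LinearMap.mem_eqLocus, ← X_mul_monomial]
  rw [action_X_mul b ((monomial_mem_restrictSupport R).mpr (.inl hj))]
  simp [tail_rep, hij, symbol_rep]

/-- The failure of `action` to be a representation, shown to vanish by induction on the degree. -/
noncomputable def curvature : L →ₗ[R] L →ₗ[R] Module.End R (MvPolynomial I R) :=
  LinearMap.mk₂ R (fun x y ↦ action b x * action b y - action b y * action b x - action b ⁅x, y⁆)
    (fun x x' y ↦ by simp only [map_add, add_lie, add_mul, mul_add]; abel)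
    (fun c x y ↦ by simp [smul_sub])
    (fun x y y' ↦ by simp only [map_add, lie_add, add_mul, mul_add]; abel)
    (fun c x y ↦ by simp [smul_sub])

lemma curvature_apply (x y : L) (f : MvPolynomial I R) :
    curvature b x y f = action b x (action b y f) - action b y (action b x f) - action b ⁅x, y⁆ f :=
  rfl

lemma curvature_swap (x y : L) : curvature b y x = -curvature b x y := by
  refine LinearMap.ext fun f ↦ ?_
  rw [LinearMap.neg_apply, curvature_apply, curvature_apply, ← lie_skew, map_neg,
    LinearMap.neg_apply]
  abel

lemma curvature_tail_rep {j : I} {f : MvPolynomial I R}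
    (hf : f ∈ restrictSupport R (exponentsGE j)) (y : L) :
    curvature b (tail b j y) (rep b j) f = 0 := by
  rw [curvature_apply, action_rep b hf, action_X_mul b hf, tail_tail, map_sub,
    action_rep b (symbol_tail_mul_mem b hf y)]
  ring

lemma curvature_rep {j : I} {f : MvPolynomial I R}
    (hf : f ∈ restrictSupport R (exponentsGE j)) (y : L) : curvature b y (rep b j) f = 0 := by
  refine mem_of_rep_mem b (N := LinearMap.ker ((curvature b).flip (rep b j) |>.flip f))
    (fun i ↦ ?_) (fun a ha ↦ ?_) y
  · rw [LinearMap.mem_ker]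
    change curvature b (rep b i) (rep b j) f = 0
    rcases lt_trichotomy i j with hij | rfl | hij
    · have hfi := restrictSupport_mono R (exponentsGE_mono hij.le) hf
      have := curvature_tail_rep b hfi (rep b j)
      rw [tail_rep, if_neg hij.not_ge] at this
      rw [curvature_swap, LinearMap.neg_apply, this, neg_zero]
    · simp [curvature_apply]
    · have := curvature_tail_rep b hf (rep b i)
      rwa [tail_rep, if_neg hij.not_ge] at this
  · have := curvature_tail_rep b hf a
    rwa [tail_of_mem b j ha] at this

lemma curvature_tail_right {j : I} {f : MvPolynomial I R}
    (hf : f ∈ restrictSupport R (exponentsGE j)) (x y : L) :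
    curvature b x (tail b j y) f = curvature b x y f := by
  refine mem_of_rep_mem b
    (N := LinearMap.eqLocus ((curvature b x).flip f ∘ₗ tail b j) ((curvature b x).flip f))
    (fun i ↦ ?_) (fun a ha ↦ ?_) y
  · by_cases hij : i ≤ j
    · simp [tail_rep, hij, curvature_rep b (restrictSupport_mono R (exponentsGE_mono hij) hf)]
    · simp [tail_rep, hij]
  · simp [tail_of_mem b j ha]

lemma curvature_tail_tail {j : I} {f : MvPolynomial I R}
    (hf : f ∈ restrictSupport R (exponentsGE j)) (x y : L) :
    curvature b (tail b j x) (tail b j y) f = curvature b x y f := by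
  rw [curvature_tail_right b hf, curvature_swap, LinearMap.neg_apply, curvature_tail_right b hf,
    curvature_swap, LinearMap.neg_apply, neg_neg]

lemma curvature_one (x y : L) : curvature b x y 1 = 0 := by
  have hrep (x : L) (i : I) : curvature b x (rep b i) 1 = 0 :=
    curvature_rep b ((monomial_mem_restrictSupport R).mpr (.inl (by simp [exponentsGE]))) x
  refine mem_of_rep_mem b (N := LinearMap.ker ((curvature b x).flip 1)) (hrep x) (fun a ha ↦ ?_) y
  refine mem_of_rep_mem b (N := LinearMap.ker (((curvature b).flip a).flip 1))
    (fun i ↦ ?_) (fun c hc ↦ ?_) x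
  · simp [curvature_swap b a (rep b i), hrep a i]
  · simp [curvature_apply, action_one, (symbol_eq_zero_iff b).mpr ha,
      (symbol_eq_zero_iff b).mpr hc, (symbol_eq_zero_iff b).mpr (A.lie_mem hc ha)]

/-- The inductive step: `X j * f` is the action of `rep b j` on `f`, so by the Jacobi identity the
curvature at `X j * f` is expressed by curvatures at `f` and at `action b y f`. -/
lemma curvature_X_mul {n : ℕ} (ih : ∀ x y, ∀ g ∈ restrictTotalDegree I R n, curvature b x y g = 0)
    {j : I} {f : MvPolynomial I R} (hfj : f ∈ restrictSupport R (exponentsGE j))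
    (hf : f ∈ restrictTotalDegree I R n) (x y : L) : curvature b x y (X j * f) = 0 := by
  suffices ∀ s t, tail b j s = s → tail b j t = t → curvature b s t (X j * f) = 0 by
    rw [← curvature_tail_tail b (X_mul_mem_restrictSupport le_rfl hfj)]
    exact this _ _ (tail_tail b j x) (tail_tail b j y)
  intro s t hs ht
  have hflat (u v : L) : action b u (action b v f) =
      action b v (action b u f) + action b ⁅u, v⁆ f := by
    rw [add_comm, ← sub_eq_iff_eq_add, ← sub_eq_zero]
    exact ih u v f hf
  have hlower {u v : L} (hv : tail b j v = v) : action b u (action b (rep b j) (action b v f)) =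
      action b (rep b j) (action b u (action b v f)) + action b ⁅u, rep b j⁆ (action b v f) := by
    rw [add_comm, ← sub_eq_iff_eq_add, ← sub_eq_zero, ← curvature_apply,
      ← sub_add_cancel (action b v f) (symbol b v * f), map_add, ih _ _ _ (action_sub_mem b _ hf),
      ← hv, curvature_rep b (symbol_tail_mul_mem b hfj v), add_zero]
  rw [← action_rep b hfj, curvature_apply, hflat t (rep b j), hflat s (rep b j),
    hflat ⁅s, t⁆ (rep b j), lie_lie s t (rep b j)]
  simp only [map_add, map_sub, LinearMap.sub_apply, hlower hs, hlower ht]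
  rw [hflat s t, hflat s ⁅t, rep b j⁆, hflat t ⁅s, rep b j⁆, map_add]
  abel

theorem curvature_eq_zero : curvature b = 0 := by
  have hdeg (n : ℕ) : ∀ x y, restrictTotalDegree I R n ≤ LinearMap.ker (curvature b x y) := by
    induction n with
    | zero => exact fun x y ↦ restrictTotalDegree_zero_le (curvature_one b x y)
    | succ n ih =>
      exact fun x y ↦ restrictTotalDegree_succ_le (curvature_one b x y)
        fun j f hfj hf ↦ curvature_X_mul b ih hfj hf x y
  refine LinearMap.ext₂ fun x y ↦ LinearMap.ext fun f ↦ ?_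
  obtain ⟨n, hn⟩ := exists_mem_restrictTotalDegree f
  exact hdeg n x y hn

attribute [local instance] LieRing.ofAssociativeRing in
/-- The representation of `L` on `Sym (L ⧸ A)` induced from the trivial representation of `A`:
the vector `1` generates it and is killed exactly by `A`. -/
noncomputable def inducedAction : L →ₗ⁅R⁆ Module.End R (MvPolynomial I R) where
  __ := action b
  map_lie' {x y} := (sub_eq_zero.mp congr($(curvature_eq_zero b) x y)).symm

end Action

section Noetherian

lemma ι_mem_span_image_iff {R L : Type*} [CommRing R] [LieRing L] [LieAlgebra R L]
    (A : LieSubalgebra R L) [Module.Free R (L ⧸ A.toSubmodule)] {y : L} :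
    UniversalEnvelopingAlgebra.ι R y ∈ Ideal.span (UniversalEnvelopingAlgebra.ι R '' (A : Set L)) ↔
      y ∈ A := by
  refine ⟨fun hy ↦ ?_, fun hy ↦ Ideal.subset_span ⟨y, hy, rfl⟩⟩
  let b := Module.Free.chooseBasis R (L ⧸ A.toSubmodule)
  classical
  let _ : LinearOrder (Module.Free.ChooseBasisIndex R (L ⧸ A.toSubmodule)) :=
    linearOrderOfSTO WellOrderingRel
  let ρ := UniversalEnvelopingAlgebra.lift R (inducedAction b)
  have hρ (z : L) : ρ (UniversalEnvelopingAlgebra.ι R z) 1 = symbol b z := by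
    rw [UniversalEnvelopingAlgebra.lift_ι_apply]
    exact action_one b z
  rw [← symbol_eq_zero_iff b, ← hρ]
  refine Submodule.span_induction (p := fun u _ ↦ ρ u 1 = 0) ?_ (by simp) ?_ ?_ hy
  · rintro - ⟨a, ha, rfl⟩
    rw [hρ]
    exact (symbol_eq_zero_iff b).mpr ha
  · intro u v _ _ hu hv
    rw [map_add, LinearMap.add_apply, hu, hv, add_zero]
  · intro u v _ hv
    rw [smul_eq_mul, map_mul, Module.End.mul_apply, hv, map_zero]

variable {K L : Type*} [Field K] [LieRing L] [LieAlgebra K L]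

lemma wellFoundedGT_lieSubalgebra [IsNoetherianRing (UniversalEnvelopingAlgebra K L)] :
    WellFoundedGT (LieSubalgebra K L) := by
  let J (A : LieSubalgebra K L) : Ideal (UniversalEnvelopingAlgebra K L) :=
    Ideal.span (UniversalEnvelopingAlgebra.ι K '' (A : Set L))
  have hJ : StrictMono J := fun A B hAB ↦ by
    obtain ⟨hle, y, hyB, hyA⟩ := SetLike.lt_iff_le_and_exists.mp hAB
    exact SetLike.lt_iff_le_and_exists.mpr ⟨Ideal.span_mono (Set.image_mono hle),
      UniversalEnvelopingAlgebra.ι K y, (ι_mem_span_image_iff B).mpr hyB,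
      mt (ι_mem_span_image_iff A).mp hyA⟩
  exact hJ.wellFoundedGT

theorem finiteDimensional_of_isLieAbelian [IsNoetherianRing (UniversalEnvelopingAlgebra K L)]
    (A : LieSubalgebra K L) [IsLieAbelian A] : FiniteDimensional K A := by
  have := wellFoundedGT_lieSubalgebra (K := K) (L := L)
  let sub (V : Submodule K A) : LieSubalgebra K L :=
    { V.map A.toSubmodule.subtype with
      lie_mem' := by
        rintro - - ⟨x, -, rfl⟩ ⟨y, -, rfl⟩
        have hxy : ⁅(x : L), (y : L)⁆ = 0 := congr($(trivial_lie_zero A A x y))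
        simp [hxy] }
  have hsub : StrictMono sub := strictMono_of_le_iff_le fun V W ↦
    (Submodule.map_le_map_iff_of_injective A.toSubmodule.injective_subtype V W).symm
  have : IsNoetherian K A := isNoetherian_iff'.mpr hsub.wellFoundedGT
  infer_instance

end Noetherian

end PBW

theorem gradedSimple_not_simple_abelian_and_notNoetherian_general
    {K L G : Type*} [Field K] [LieRing L] [LieAlgebra K L]
    [AddCommGroup G] [IsAddTorsionFree G] [DecidableEq G]
    {𝓛 : G → Submodule K L} [DirectSum.Decomposition 𝓛] (h : GradedLie.IsGradedLieModule 𝓛 𝓛)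
    (hs : GradedLie.IsGradedSimple L 𝓛) (hL : ∃ I : LieIdeal K L, I ≠ ⊥ ∧ I ≠ ⊤) :
    (∃ A : LieSubalgebra K L, IsLieAbelian A ∧ ¬ FiniteDimensional K A) ∧
      ¬ IsNoetherianRing (UniversalEnvelopingAlgebra K L) := by
  obtain ⟨I, hI, hI'⟩ := hL
  obtain ⟨A, hA, hinf⟩ := GradedLie.exists_isLieAbelian_not_finiteDimensional h hs hI hI'
  exact ⟨⟨A, hA, hinf⟩, fun _ ↦ hinf (PBW.finiteDimensional_of_isLieAbelian A)⟩

/-- Let `L` be a `ℤⁿ`-graded Lie algebra over a field of characteristic zero with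
finite-dimensional homogeneous components, which is graded-simple (dimension at
least `2` and no nontrivial proper graded ideals) but not simple as a Lie
algebra.  Then `L` contains an infinite-dimensional abelian Lie subalgebra;
consequently `U(L)` is not left Noetherian. -/
theorem gradedSimple_not_simple_abelian_and_notNoetherian
    (K : Type*) [Field K] [CharZero K]
    (L : Type*) [LieRing L] [LieAlgebra K L]
    (n : ℕ)
    (comp : (Fin n → ℤ) → Submodule K L)
    (hint : DirectSum.IsInternal comp)
    (hbr : ∀ a b : Fin n → ℤ, ∀ x ∈ comp a, ∀ y ∈ comp b, ⁅x, y⁆ ∈ comp (a + b))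
    (hfd : ∀ g : Fin n → ℤ, FiniteDimensional K (comp g))
    (hdim : 2 ≤ Module.rank K L)
    (hgradedSimple : ∀ I : LieIdeal K L,
      ((I : Submodule K L) = ⨆ g : Fin n → ℤ, ((I : Submodule K L) ⊓ comp g)) →
        I = ⊥ ∨ I = ⊤)
    (hnotSimple : ∃ I : LieIdeal K L, I ≠ ⊥ ∧ I ≠ ⊤) :
    (∃ A : LieSubalgebra K L, IsLieAbelian A ∧ ¬ FiniteDimensional K A) ∧
      ¬ IsNoetherianRing (UniversalEnvelopingAlgebra K L) := by
  let _ := hint.chooseDecomposition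
  exact gradedSimple_not_simple_abelian_and_notNoetherian_general
    ⟨hint.submodule_iSup_eq_top, fun b z hz a m hm ↦ add_comm b a ▸ hbr b a z hz m hm⟩
    hgradedSimple hnotSimple
end
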